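/- Let n be a positive integer. Then t(1,5,5,5;n) = Σ_{d | 8n+16} (−1)^d·((5/d) + (5/((8n+16)/d)))·d − Σ_{d | 2n+4} (−1)^d·((5/d) + (5/((2n+4)/d)))·d, where (5/·) is the Kronecker symbol and both sums are over positive divisors. -/

import Mathlib

/-!
Write `χ` for the quadratic character modulo `5`, `β(m) = ∑ χ(a) b` and `α(m) = ∑ χ(b) b`, both sums
being over the factorizations `m = a b` with `a` odd. The theorem rests on the formula
`t(1,5,5,5;n) = 4 (β(n+2) - α(n+2))` (`tquad_eq`).

With `Ψ(q) = ∑_{n ∈ ℤ} q^{n(n-1)/2}`, which is `theta 1 q`, the generating function of the left side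
is `Ψ(q) Ψ(q⁵)³`, and those of `β` and `α` are the Lambert series
`B = ∑_{a odd} χ(a) q^a / (1 - q^a)²` and `A = ∑_{a odd} ∑_b χ(b) b q^{ab}`. So the formula amounts to
the identity `q² Ψ(q) Ψ(q⁵)³ = 4 (B - A)` (`theta_eq_lambert`).

Both Lambert series are differences of two values of the Weierstrass function `℘`. Sorting a double
theta series by parity gives addition formulas for `theta`, which turn the three-term relation
(`weierstrass_three_term`) into a Plücker relation; its first-order term at `t = 1`, computed from
Jacobi's triple product, is the formula for `℘(u) - ℘(v)` as a quotient of theta functions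
(`lam_sub_lam`). In base `q^10`, with arguments `q³` and `q`, this yields
`4 B = q Ψ(q) Ψ(q⁵) T(q)` where `T(q) = theta (q³) (q⁵) * theta q (q⁵)` (`lambertB_eq`). In base `q²`,
with arguments `ζ² q` and `ζ q` for a primitive fifth root of unity `ζ`, and after division by the
Gauss sum `ζ + ζ⁴ - ζ² - ζ³`, it yields `4 A = -q Ψ(q) Ψ(q⁵) ζ θ(ζ) θ(ζ²)`, where
`θ(x) = theta x q` (`lambertA_eq`). Sorting
the double series `θ(ζ) θ(ζ²)` by `m + 2n` modulo `5` shows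
`ζ θ(ζ) θ(ζ²) = q Ψ(q⁵)² - T(q)` (`theta_split`), and subtraction gives the identity.

The divisor sums of the theorem are related to `β` and `α` by sorting the divisors of `2N` by parity:
as `χ(2) = -1`, passing from `2(n+2)` to `8(n+2)` leaves the odd divisors without effect and changes
the rest by exactly `4 (β(n+2) - α(n+2))` (`signedSum_sub`). Finally `(5/d) = χ(d)` by quadratic
reciprocity.
-/

open scoped BigOperators

/-- `Nquad a b c d n` is the number of quadruples `(x,y,z,w) ∈ ℤ⁴` with
`n = a*x^2 + b*y^2 + c*z^2 + d*w^2`. -/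
noncomputable def Nquad (a b c d : ℕ) (n : ℕ) : ℕ :=
  Nat.card {p : ℤ × ℤ × ℤ × ℤ //
    (n : ℤ) = a * p.1 ^ 2 + b * p.2.1 ^ 2 + c * p.2.2.1 ^ 2 + d * p.2.2.2 ^ 2}

/-- `tquad a b c d n` is the number of quadruples `(x,y,z,w) ∈ ℤ⁴` with
`n = a*x(x-1)/2 + b*y(y-1)/2 + c*z(z-1)/2 + d*w(w-1)/2`. -/
noncomputable def tquad (a b c d : ℕ) (n : ℕ) : ℕ :=
  Nat.card {p : ℤ × ℤ × ℤ × ℤ //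
    (n : ℤ) = a * (p.1 * (p.1 - 1) / 2) + b * (p.2.1 * (p.2.1 - 1) / 2)
      + c * (p.2.2.1 * (p.2.2.1 - 1) / 2) + d * (p.2.2.2 * (p.2.2.2 - 1) / 2)}

/-- The value of the Kronecker symbol `(a/2)`. -/
def kronTwo (a : ℤ) : ℤ :=
  if a % 2 = 0 then 0 else if a % 8 = 1 ∨ a % 8 = 7 then 1 else -1

/-- The Kronecker (Legendre–Jacobi–Kronecker) symbol `(a/n)` for a positive
natural number `n`: it is the Jacobi symbol on the odd part of `n`, extended
multiplicatively via `(a/2)`. -/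
def kroneckerSym (a : ℤ) (n : ℕ) : ℤ :=
  kronTwo a ^ (n.factorization 2) * jacobiSym a (n / 2 ^ (n.factorization 2))

section

open Filter Topology

/-! ### Infinite products -/

/-- The infinite `q`-Pochhammer symbol `(a; q)_∞ = ∏_{n ≥ 0} (1 - a qⁿ)`. -/
noncomputable def qPoch (a q : ℂ) : ℂ := ∏' n : ℕ, (1 - a * q ^ n)

lemma qPoch_summable (a : ℂ) {q : ℂ} (hq : ‖q‖ < 1) : Summable fun n : ℕ => ‖-(a * q ^ n)‖ := by
  simp only [norm_neg, norm_mul, norm_pow]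
  exact (summable_geometric_of_lt_one (norm_nonneg _) hq).mul_left _

lemma qPoch_multipliable (a : ℂ) {q : ℂ} (hq : ‖q‖ < 1) :
    Multipliable fun n : ℕ => (1 - a * q ^ n) := by
  simpa only [sub_eq_add_neg] using multipliable_one_add_of_summable (qPoch_summable a hq)

lemma qPoch_tendsto (a : ℂ) {q : ℂ} (hq : ‖q‖ < 1) :
    Tendsto (fun N => ∏ n ∈ Finset.range N, (1 - a * q ^ n)) atTop (𝓝 (qPoch a q)) :=
  (qPoch_multipliable a hq).hasProd.tendsto_prod_nat

lemma qPoch_ne_zero (a : ℂ) {q : ℂ} (hq : ‖q‖ < 1) (h : ∀ n : ℕ, a * q ^ n ≠ 1) :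
    qPoch a q ≠ 0 := by
  have := tprod_one_add_ne_zero_of_summable (f := fun n : ℕ => -(a * q ^ n))
    (fun n => by rw [← sub_eq_add_neg]; exact sub_ne_zero.2 (h n).symm) (qPoch_summable a hq)
  simpa only [qPoch, sub_eq_add_neg] using this

lemma mul_pow_ne_one {a q : ℂ} (hq : ‖q‖ < 1) (ha : ‖a‖ < 1) (n : ℕ) : a * q ^ n ≠ 1 := by
  intro h
  have h1 : ‖a * q ^ n‖ = 1 := by rw [h]; simp
  rw [norm_mul, norm_pow] at h1
  have : ‖q‖ ^ n ≤ 1 := pow_le_one₀ (norm_nonneg _) hq.le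
  nlinarith [norm_nonneg a, norm_nonneg q]

lemma qPoch_ne_zero_of_norm_lt {a q : ℂ} (hq : ‖q‖ < 1) (ha : ‖a‖ < 1) : qPoch a q ≠ 0 :=
  qPoch_ne_zero a hq (mul_pow_ne_one hq ha)

lemma qPoch_step (a : ℂ) {q : ℂ} (hq : ‖q‖ < 1) : qPoch a q = (1 - a) * qPoch (a * q) q := by
  have h := (qPoch_tendsto a hq).comp (tendsto_add_atTop_nat 1)
  refine tendsto_nhds_unique h (((qPoch_tendsto (a * q) hq).const_mul (1 - a)).congr fun N => ?_)
  rw [Function.comp_apply, Finset.prod_range_succ']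
  rw [mul_comm]
  congr 1
  · exact Finset.prod_congr rfl fun n _ => by ring
  · simp

/-- Splitting the factors of `(a; q)_∞` by the exponent modulo `k`. -/
lemma qPoch_dissect (a : ℂ) {q : ℂ} (hq : ‖q‖ < 1) (k : ℕ) (hk : k ≠ 0) :
    qPoch a q = ∏ j ∈ Finset.range k, qPoch (a * q ^ j) (q ^ k) := by
  have hqk : ‖q ^ k‖ < 1 := by rw [norm_pow]; exact pow_lt_one₀ (norm_nonneg _) hq hk
  have h := (qPoch_tendsto a hq).comp (tendsto_id.const_mul_atTop' (Nat.pos_of_ne_zero hk))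
  refine tendsto_nhds_unique h ((tendsto_finsetProd (Finset.range k)
    fun j _ => qPoch_tendsto (a * q ^ j) hqk).congr fun N => ?_)
  rw [Finset.prod_comm]
  simp only [Function.comp_apply, id]
  induction N with
  | zero => simp
  | succ N ih =>
    rw [Finset.prod_range_succ, ih, mul_add, mul_one, Finset.prod_range_add]
    congr 1
    exact Finset.prod_congr rfl fun j _ => by rw [mul_assoc, ← pow_mul, ← pow_add, add_comm]

lemma qPoch_mul_neg (a : ℂ) {q : ℂ} (hq : ‖q‖ < 1) :
    qPoch a q * qPoch (-a) q = qPoch (a ^ 2) (q ^ 2) := by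
  have hq2 : ‖q ^ 2‖ < 1 := by rw [norm_pow]; exact pow_lt_one₀ (norm_nonneg _) hq two_ne_zero
  refine tendsto_nhds_unique ((qPoch_tendsto a hq).mul (qPoch_tendsto (-a) hq))
    ((qPoch_tendsto (a ^ 2) hq2).congr fun N => ?_)
  rw [← Finset.prod_mul_distrib]
  exact Finset.prod_congr rfl fun n _ => by ring

/-- The product over the fifth roots of unity `ζ^j`. -/
lemma qPoch_zeta {ζ : ℂ} (hζ : 1 + ζ + ζ ^ 2 + ζ ^ 3 + ζ ^ 4 = 0) (a : ℂ) {q : ℂ} (hq : ‖q‖ < 1) :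
    qPoch a q * qPoch (ζ * a) q * qPoch (ζ ^ 2 * a) q * qPoch (ζ ^ 3 * a) q * qPoch (ζ ^ 4 * a) q =
      qPoch (a ^ 5) (q ^ 5) := by
  have hq2 : ‖q ^ 5‖ < 1 := by rw [norm_pow]; exact pow_lt_one₀ (norm_nonneg _) hq (by norm_num)
  refine tendsto_nhds_unique (((((qPoch_tendsto a hq).mul (qPoch_tendsto (ζ * a) hq)).mul
    (qPoch_tendsto (ζ ^ 2 * a) hq)).mul (qPoch_tendsto (ζ ^ 3 * a) hq)).mul
    (qPoch_tendsto (ζ ^ 4 * a) hq))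
    ((qPoch_tendsto (a ^ 5) hq2).congr fun N => ?_)
  simp only [← Finset.prod_mul_distrib]
  refine Finset.prod_congr rfl fun n _ => ?_
  have h4 : ζ ^ 4 = -(1 + ζ + ζ ^ 2 + ζ ^ 3) := by linear_combination hζ
  have h5 : ζ ^ 5 = 1 := by linear_combination (ζ - 1) * hζ
  have key : ∀ z : ℂ, 1 - z ^ 5 =
      (1 - z) * (1 - ζ * z) * (1 - ζ ^ 2 * z) * (1 - ζ ^ 3 * z) * (1 - ζ ^ 4 * z) := by
    intro z
    have e1 : (1 - ζ * z) * (1 - ζ ^ 4 * z) = 1 - (ζ + ζ ^ 4) * z + z ^ 2 := by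
      linear_combination z ^ 2 * h5
    have e2 : (1 - ζ ^ 2 * z) * (1 - ζ ^ 3 * z) = 1 - (ζ ^ 2 + ζ ^ 3) * z + z ^ 2 := by
      linear_combination z ^ 2 * h5
    have e3 : (ζ + ζ ^ 4) * (ζ ^ 2 + ζ ^ 3) = -1 := by
      linear_combination (ζ + ζ ^ 2) * h5 + hζ
    have e4 : (ζ + ζ ^ 4) + (ζ ^ 2 + ζ ^ 3) = -1 := by linear_combination hζ
    calc 1 - z ^ 5 = (1 - z) * ((1 - (ζ + ζ ^ 4) * z + z ^ 2) *
          (1 - (ζ ^ 2 + ζ ^ 3) * z + z ^ 2)) := by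
          linear_combination (-(1 - z) * z ^ 2) * e3 + ((1 - z) * (z + z ^ 3)) * e4
      _ = _ := by rw [← e1, ← e2]; ring
  have := key (a * q ^ n)
  rw [show a ^ 5 * (q ^ 5) ^ n = (a * q ^ n) ^ 5 by ring, this]
  ring

/-! ### Theta series and Jacobi's triple product -/

/-- The exponent `n(n-1)/2` for an integer `n`. -/
def triZ (n : ℤ) : ℤ := n * (n - 1) / 2

lemma two_mul_triZ (n : ℤ) : 2 * triZ n = n * (n - 1) := by
  unfold triZ
  have : (2 : ℤ) ∣ n * (n - 1) := by
    have := Int.even_mul_pred_self n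
    exact this.two_dvd
  omega

lemma triZ_succ (n : ℤ) : triZ (n + 1) = triZ n + n := by
  have h1 := two_mul_triZ (n + 1)
  have h2 := two_mul_triZ n
  have : 2 * triZ (n + 1) = 2 * (triZ n + n) := by rw [h1, mul_add, h2]; ring
  omega

lemma triZ_nonneg (n : ℤ) : 0 ≤ triZ n := by
  have h2 := two_mul_triZ n
  rcases le_or_gt n 0 with h | h <;> nlinarith

/-- The theta series `∑_{n ∈ ℤ} q^{n(n-1)/2} xⁿ`. -/
noncomputable def theta (x q : ℂ) : ℂ := ∑' n : ℤ, q ^ triZ n * x ^ n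

lemma theta_summable {x q : ℂ} (hx : x ≠ 0) (h0 : q ≠ 0) (hq : ‖q‖ < 1) :
    Summable fun n : ℤ => ‖q ^ triZ n * x ^ n‖ := by
  have key : ∀ (c : ℂ), Tendsto (fun n : ℕ => ‖c * q ^ n‖) atTop (𝓝 0) := by
    intro c
    have := (tendsto_pow_atTop_nhds_zero_of_norm_lt_one hq).const_mul c
    simpa using this.norm
  refine Summable.of_nat_of_neg ?_ ?_
  · refine summable_of_ratio_test_tendsto_lt_one (l := 0) zero_lt_one
      (Eventually.of_forall fun n => ?_) ((key x).congr fun n => ?_)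
    · simp [h0, hx, zpow_ne_zero]
    · have : q ^ triZ ((n + 1 : ℕ) : ℤ) * x ^ ((n + 1 : ℕ) : ℤ) =
          (q ^ triZ n * x ^ (n : ℤ)) * (x * q ^ n) := by
        push_cast
        rw [triZ_succ, zpow_add₀ h0, zpow_add₀ hx, zpow_one, zpow_natCast q]
        ring
      rw [this, norm_norm, norm_norm, norm_mul (q ^ (_ : ℤ) * x ^ (_ : ℤ)), mul_div_cancel_left₀]
      simp [h0, hx, zpow_ne_zero]
  · refine summable_of_ratio_test_tendsto_lt_one (l := 0) zero_lt_one
      (Eventually.of_forall fun n => ?_) ((key (q * x⁻¹)).congr fun n => ?_)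
    · simp [h0, hx, zpow_ne_zero]
    · have : q ^ triZ (-((n + 1 : ℕ) : ℤ)) * x ^ (-((n + 1 : ℕ) : ℤ)) =
          (q ^ triZ (-(n : ℤ)) * x ^ (-(n : ℤ))) * (q * x⁻¹ * q ^ n) := by
        have e := triZ_succ (-((n + 1 : ℕ) : ℤ))
        rw [show (-((n + 1 : ℕ) : ℤ)) + 1 = -(n : ℤ) by push_cast; ring] at e
        rw [show triZ (-((n + 1 : ℕ) : ℤ)) = triZ (-(n : ℤ)) + ((n + 1 : ℕ) : ℤ) by
          rw [e]; ring]
        rw [zpow_add₀ h0, show (-((n + 1 : ℕ) : ℤ)) = -(n : ℤ) + (-1) by push_cast; ring,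
          zpow_add₀ hx, zpow_neg_one, zpow_natCast]
        ring
      rw [this, norm_norm, norm_norm, norm_mul (q ^ (_ : ℤ) * x ^ (_ : ℤ)), mul_div_cancel_left₀]
      simp [h0, hx, zpow_ne_zero]

/-- Gaussian binomial coefficients, by the `q`-Pascal recursion. -/
def gaussBin (q : ℂ) : ℕ → ℕ → ℂ
  | _, 0 => 1
  | 0, _ + 1 => 0
  | n + 1, k + 1 => gaussBin q n k + q ^ (k + 1) * gaussBin q n (k + 1)

lemma gaussBin_eq_zero (q : ℂ) : ∀ n k : ℕ, n < k → gaussBin q n k = 0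
  | 0, _ + 1, _ => rfl
  | n + 1, k + 1, h => by
    rw [gaussBin, gaussBin_eq_zero q n k (by omega), gaussBin_eq_zero q n (k + 1) (by omega)]
    simp

lemma qBinomial (q : ℂ) (n : ℕ) : ∀ y : ℂ, ∏ k ∈ Finset.range n, (1 + y * q ^ k) =
    ∑ i ∈ Finset.range (n + 1), gaussBin q n i * q ^ (i.choose 2) * y ^ i := by
  induction n with
  | zero => intro y; simp [gaussBin]
  | succ n ih =>
    intro y
    have h1 : ∏ k ∈ Finset.range (n + 1), (1 + y * q ^ k) =
        (1 + y) * ∏ k ∈ Finset.range n, (1 + (y * q) * q ^ k) := by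
      rw [Finset.prod_range_succ', mul_comm]
      congr 1
      · simp
      · exact Finset.prod_congr rfl fun k _ => by ring
    rw [h1, ih, Finset.sum_range_succ' _ (n + 1)]
    have h2 : ∀ i, gaussBin q (n + 1) (i + 1) * q ^ ((i + 1).choose 2) * y ^ (i + 1) =
        y * (gaussBin q n i * q ^ (i.choose 2) * (y * q) ^ i) +
        gaussBin q n (i + 1) * q ^ ((i + 1).choose 2) * (y * q) ^ (i + 1) := by
      intro i
      rw [gaussBin, Nat.choose_succ_succ' i 1, Nat.choose_one_right, pow_add]
      ring
    rw [Finset.sum_congr rfl fun i _ => h2 i, Finset.sum_add_distrib, ← Finset.mul_sum]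
    have h3 := Finset.sum_range_succ' (fun i => gaussBin q n i * q ^ (i.choose 2) * (y * q) ^ i)
      (n + 1)
    rw [Finset.sum_range_succ _ (n + 1), gaussBin_eq_zero q n (n + 1) (by omega)] at h3
    simp only [gaussBin] at h3 ⊢
    linear_combination h3

/-- The finite product `(q; q)_n`. -/
noncomputable def qFact (q : ℂ) (n : ℕ) : ℂ := ∏ k ∈ Finset.range n, (1 - q * q ^ k)

lemma gaussBin_mul (q : ℂ) : ∀ n k : ℕ, k ≤ n →
    gaussBin q n k * (qFact q k * qFact q (n - k)) = qFact q n
  | n, 0, _ => by simp [gaussBin, qFact]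
  | n + 1, k + 1, h => by
    have hk := gaussBin_mul q n k (by omega)
    rw [gaussBin, show n + 1 - (k + 1) = n - k by omega]
    have s : ∀ m, qFact q (m + 1) = qFact q m * (1 - q * q ^ m) :=
      fun m => Finset.prod_range_succ _ _
    rcases Nat.lt_or_ge k n with h' | h'
    · have hk1 := gaussBin_mul q n (k + 1) (by omega)
      obtain ⟨d, rfl⟩ : ∃ d, n = k + 1 + d := ⟨n - (k + 1), by omega⟩
      rw [show k + 1 + d - k = d + 1 by omega] at hk ⊢
      rw [show k + 1 + d - (k + 1) = d by omega] at hk1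
      rw [s d] at hk ⊢
      rw [s (k + 1 + d)]
      rw [s k] at hk1 ⊢
      have e : q * q ^ (k + 1 + d) = q ^ (k + 1) * (q * q ^ d) := by ring
      rw [e]
      linear_combination (1 - q ^ (k + 1)) * hk + q ^ (k + 1) * (1 - q * q ^ d) * hk1
    · obtain rfl : k = n := by omega
      rw [gaussBin_eq_zero q k (k + 1) (by omega), s k]
      linear_combination (1 - q * q ^ k) * hk

lemma qFact_ne_zero {q : ℂ} (hq : ‖q‖ < 1) (n : ℕ) : qFact q n ≠ 0 :=
  Finset.prod_ne_zero_iff.2 fun k _ => sub_ne_zero.2 (mul_pow_ne_one hq hq k).symm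

lemma gaussBin_eq_div {q : ℂ} (hq : ‖q‖ < 1) {n k : ℕ} (h : k ≤ n) :
    gaussBin q n k = qFact q n * (qFact q k)⁻¹ * (qFact q (n - k))⁻¹ := by
  rw [← gaussBin_mul q n k h]
  field_simp [qFact_ne_zero hq]

lemma qFact_tendsto {q : ℂ} (hq : ‖q‖ < 1) : Tendsto (qFact q) atTop (𝓝 (qPoch q q)) :=
  qPoch_tendsto q hq

/-- Finite form of the triple product: the `q`-binomial theorem recentred at its middle term. -/
lemma finite_jacobi {x q : ℂ} (hx : x ≠ 0) (h0 : q ≠ 0) (N : ℕ) :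
    (∏ n ∈ Finset.range N, (1 - -x * q ^ n)) * (∏ n ∈ Finset.range N, (1 - -q / x * q ^ n)) =
    ∑ i ∈ Finset.range (2 * N + 1), gaussBin q (2 * N) i *
      (q ^ triZ ((i : ℤ) - N) * x ^ ((i : ℤ) - N)) := by
  have hb := qBinomial q (2 * N) (x * q ^ (-(N : ℤ)))
  have hch : ∀ i : ℕ, ((i.choose 2 : ℕ) : ℤ) = triZ i := by
    intro i
    induction i with
    | zero => rfl
    | succ i ih =>
      rw [Nat.choose_succ_succ' i 1, Nat.choose_one_right]
      push_cast
      rw [triZ_succ, ← ih]; ring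
  -- the factors with index below `N` are inverted to match `1 + q^k / x`
  have hl : ∏ k ∈ Finset.range (2 * N), (1 + x * q ^ (-(N : ℤ)) * q ^ k) =
      (x ^ N * q ^ (-triZ ((N : ℤ) + 1))) * ((∏ n ∈ Finset.range N, (1 - -x * q ^ n)) *
        (∏ n ∈ Finset.range N, (1 - -q / x * q ^ n))) := by
    have hneg : ∀ M : ℕ, ∏ k ∈ Finset.range M, (1 + x * q ^ (-(M : ℤ)) * q ^ k) =
        x ^ M * q ^ (-triZ ((M : ℤ) + 1)) * ∏ n ∈ Finset.range M, (1 - -q / x * q ^ n) := by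
      intro M
      induction M with
      | zero => simp [triZ]
      | succ M ih =>
        rw [Finset.prod_range_succ', Finset.prod_range_succ]
        have e1 : ∀ k ∈ Finset.range M, (1 + x * q ^ (-((M + 1 : ℕ) : ℤ)) * q ^ (k + 1)) =
            1 + x * q ^ (-(M : ℤ)) * q ^ k := by
          intro k _
          rw [show (-((M + 1 : ℕ) : ℤ)) = -(M : ℤ) + (-1) by push_cast; ring, zpow_add₀ h0,
            zpow_neg_one]
          field_simp
          ring
        rw [Finset.prod_congr rfl e1, ih]
        have e2 : (1 + x * q ^ (-((M + 1 : ℕ) : ℤ)) * q ^ 0) =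
            x * q ^ (-((M : ℤ) + 1)) * (1 - -q / x * q ^ M) := by
          rw [pow_zero, mul_one]
          have : q ^ (-((M : ℤ) + 1)) * (q * q ^ M) = 1 := by
            rw [← pow_succ', ← zpow_natCast, ← zpow_add₀ h0]
            push_cast
            simp
          field_simp
          push_cast
          linear_combination -this
        rw [e2, show triZ ((M + 1 : ℕ) + 1) = triZ ((M : ℤ) + 1) + (M + 1) by
          push_cast; rw [triZ_succ], neg_add (triZ _), zpow_add₀ h0]
        ring
    rw [two_mul, Finset.prod_range_add, hneg N]
    have e3 : ∀ k ∈ Finset.range N, (1 + x * q ^ (-(N : ℤ)) * q ^ (N + k)) =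
        (1 - -x * q ^ k) := by
      intro k _
      have : q ^ (-(N : ℤ)) * q ^ N = 1 := by
        rw [← zpow_natCast, ← zpow_add₀ h0]; simp
      rw [pow_add]
      linear_combination x * q ^ k * this
    rw [Finset.prod_congr rfl e3]
    ring
  have hne : x ^ N * q ^ (-triZ ((N : ℤ) + 1)) ≠ 0 :=
    mul_ne_zero (pow_ne_zero _ hx) (zpow_ne_zero _ h0)
  apply mul_left_cancel₀ hne
  rw [← hl, hb, Finset.mul_sum]
  refine Finset.sum_congr rfl fun i _ => ?_
  have e4 : triZ ((i : ℤ) - N) = triZ i - i * N + triZ ((N : ℤ) + 1) := by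
    have a1 := two_mul_triZ ((i : ℤ) - N)
    have a2 := two_mul_triZ (i : ℤ)
    have a3 := two_mul_triZ ((N : ℤ) + 1)
    have : 2 * triZ ((i : ℤ) - N) = 2 * (triZ i - i * N + triZ ((N : ℤ) + 1)) := by
      linear_combination a1 - a2 - a3
    omega
  rw [e4, zpow_add₀ h0, zpow_sub₀ h0, zpow_sub₀ hx, ← zpow_natCast q (i.choose 2), hch, zpow_neg,
    mul_pow, mul_comm (i : ℤ) N, zpow_mul, zpow_neg, zpow_natCast, zpow_natCast x, zpow_natCast x,
    inv_pow]
  have := zpow_ne_zero (triZ ((N : ℤ) + 1)) h0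
  field_simp
  rw [zpow_natCast]

/-- **Jacobi's triple product identity.** -/
lemma jacobi_triple {x q : ℂ} (hx : x ≠ 0) (h0 : q ≠ 0) (hq : ‖q‖ < 1) :
    theta x q = qPoch q q * qPoch (-x) q * qPoch (-q / x) q := by
  have hf0 : qPoch q q ≠ 0 := qPoch_ne_zero_of_norm_lt hq hq
  let g : ℕ → ℤ → ℂ := fun N j => if -(N : ℤ) ≤ j ∧ j ≤ N then
    gaussBin q (2 * N) (j + N).toNat * (q ^ triZ j * x ^ j) else 0
  have hsum : ∀ N : ℕ, ∑' j, g N j = (∏ n ∈ Finset.range N, (1 - -x * q ^ n)) *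
      (∏ n ∈ Finset.range N, (1 - -q / x * q ^ n)) := by
    intro N
    rw [finite_jacobi hx h0, tsum_eq_sum (s := Finset.Icc (-(N : ℤ)) N)]
    · symm
      refine Finset.sum_bij (fun (i : ℕ) _ => (i : ℤ) - N) ?_ ?_ ?_ ?_
      · intro i hi
        simp only [Finset.mem_range] at hi
        simp only [Finset.mem_Icc]
        omega
      · intro i _ j _ h
        omega
      · intro j hj
        simp only [Finset.mem_Icc] at hj
        exact ⟨(j + N).toNat, by simp only [Finset.mem_range]; omega, by omega⟩
      · intro i hi
        simp only [Finset.mem_range] at hi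
        simp only [g]
        rw [if_pos (by omega), show ((i : ℤ) - N + N).toNat = i by omega]
    · intro j hj
      simp only [Finset.mem_Icc] at hj
      simp only [g]
      rw [if_neg hj]
  obtain ⟨C, hC⟩ := (Metric.isBounded_range_of_tendsto _ (qFact_tendsto hq)).exists_norm_le
  obtain ⟨D, hD⟩ := (Metric.isBounded_range_of_tendsto _
    ((qFact_tendsto hq).inv₀ hf0)).exists_norm_le
  have hC' : ∀ n, ‖qFact q n‖ ≤ C := fun n => hC _ ⟨n, rfl⟩
  have hD' : ∀ n, ‖(qFact q n)⁻¹‖ ≤ D := fun n => hD _ ⟨n, rfl⟩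
  have hC0 : 0 ≤ C := (norm_nonneg _).trans (hC' 0)
  have hD0 : 0 ≤ D := (norm_nonneg _).trans (hD' 0)
  have hlim : Tendsto (fun N => ∑' j, g N j) atTop
      (𝓝 (∑' j, (qPoch q q)⁻¹ * (q ^ triZ j * x ^ j))) := by
    refine tendsto_tsum_of_dominated_convergence
      (bound := fun j => C * D * D * ‖q ^ triZ j * x ^ j‖)
      ((theta_summable hx h0 hq).mul_left _) ?_ ?_
    · intro j
      have hA : Tendsto (fun N : ℕ => qFact q (2 * N) * (qFact q (j + N).toNat)⁻¹ *
          (qFact q (2 * N - (j + N).toNat))⁻¹ * (q ^ triZ j * x ^ j)) atTop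
          (𝓝 (qPoch q q * (qPoch q q)⁻¹ * (qPoch q q)⁻¹ * (q ^ triZ j * x ^ j))) := by
        have t1 : Tendsto (fun N : ℕ => 2 * N) atTop atTop :=
          tendsto_atTop_mono (fun N => by simp only [id]; omega) tendsto_id
        have t2 : Tendsto (fun N : ℕ => (j + N).toNat) atTop atTop :=
          tendsto_atTop_mono (fun N => by omega) (tendsto_sub_atTop_nat j.natAbs)
        have t3 : Tendsto (fun N : ℕ => 2 * N - (j + N).toNat) atTop atTop :=
          tendsto_atTop_mono (fun N => by omega) (tendsto_sub_atTop_nat j.natAbs)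
        exact ((((qFact_tendsto hq).comp t1).mul (((qFact_tendsto hq).comp t2).inv₀ hf0)).mul
          (((qFact_tendsto hq).comp t3).inv₀ hf0)).mul_const _
      rw [mul_inv_cancel₀ hf0, one_mul] at hA
      refine hA.congr' ?_
      filter_upwards [eventually_ge_atTop j.natAbs] with N hN
      simp only [g]
      rw [if_pos (by omega), gaussBin_eq_div hq (by omega)]
    · refine Eventually.of_forall fun N j => ?_
      simp only [g]
      split_ifs with h
      · rw [gaussBin_eq_div hq (by omega), norm_mul, norm_mul, norm_mul]
        gcongr
        · exact hC' _
        · exact hD' _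
        · exact hD' _
      · rw [norm_zero]; positivity
  rw [tsum_mul_left] at hlim
  have hlim2 : Tendsto (fun N => ∑' j, g N j) atTop (𝓝 (qPoch (-x) q * qPoch (-q / x) q)) := by
    simp only [hsum]
    exact (qPoch_tendsto (-x) hq).mul (qPoch_tendsto (-q / x) hq)
  have := tendsto_nhds_unique hlim hlim2
  rw [mul_assoc, ← this, ← mul_assoc, mul_inv_cancel₀ hf0, one_mul]
  rfl

/-! ### The three-term relation and deformations of products -/

lemma tsum_partition {r : ℕ} (e : Fin r → ℤ × ℤ → ℤ × ℤ)
    (he : Function.Bijective fun p : Fin r × (ℤ × ℤ) => e p.1 p.2) {f : ℤ × ℤ → ℂ}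
    (hf : Summable f) : ∑' p, f p = ∑ k, ∑' p, f (e k p) := by
  have h2 : Summable fun p : Fin r × (ℤ × ℤ) => f (e p.1 p.2) :=
    (Equiv.ofBijective _ he).summable_iff.2 hf
  rw [← (Equiv.ofBijective _ he).tsum_eq f, ← tsum_fintype (L := .unconditional _)]
  exact h2.tsum_prod

lemma theta_mul_theta {x y q p : ℂ} (hx : x ≠ 0) (hy : y ≠ 0) (h0 : q ≠ 0) (hq : ‖q‖ < 1)
    (hp0 : p ≠ 0) (hp : ‖p‖ < 1) :
    theta x q * theta y p =
      ∑' m : ℤ × ℤ, (q ^ triZ m.1 * x ^ m.1) * (p ^ triZ m.2 * y ^ m.2) :=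
  tsum_mul_tsum_of_summable_norm (theta_summable hx h0 hq) (theta_summable hy hp0 hp)

lemma theta_mul_summable {x y q : ℂ} (hx : x ≠ 0) (hy : y ≠ 0) (h0 : q ≠ 0) (hq : ‖q‖ < 1) :
    Summable fun m : ℤ × ℤ => (q ^ triZ m.1 * x ^ m.1) * (q ^ triZ m.2 * y ^ m.2) :=
  summable_mul_of_summable_norm (f := fun n : ℤ => q ^ triZ n * x ^ n)
    (g := fun n : ℤ => q ^ triZ n * y ^ n) (theta_summable hx h0 hq) (theta_summable hy h0 hq)

/-- The even theta function `∑ q^{j²} t^{2j}`, written through `theta`. -/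
noncomputable def thetaEven (t q : ℂ) : ℂ := theta (q * t ^ 2) (q ^ 2)

/-- The odd theta function `∑ q^{j²+j} t^{2j+1}`, written through `theta`. -/
noncomputable def thetaOdd (t q : ℂ) : ℂ := t * theta (q ^ 2 * t ^ 2) (q ^ 2)

/-- Sorting the terms of the double series by the parity of `m + n`. -/
lemma theta_addition {x t q : ℂ} (hx : x ≠ 0) (ht : t ≠ 0) (h0 : q ≠ 0) (hq : ‖q‖ < 1) :
    theta (x * t) q * theta (x / t) q =
      x * (thetaOdd x q * thetaEven t q + thetaEven x q * thetaOdd t q) := by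
  have hq2 : ‖q ^ 2‖ < 1 := by rw [norm_pow]; exact pow_lt_one₀ (norm_nonneg _) hq two_ne_zero
  have h02 : q ^ 2 ≠ 0 := pow_ne_zero _ h0
  have hxt : x * t ≠ 0 := mul_ne_zero hx ht
  have hxt' : x / t ≠ 0 := div_ne_zero hx ht
  have a1 : ∀ s : ℂ, s ≠ 0 → q * s ^ 2 ≠ 0 := fun s hs => mul_ne_zero h0 (pow_ne_zero _ hs)
  have a2 : ∀ s : ℂ, s ≠ 0 → q ^ 2 * s ^ 2 ≠ 0 := fun s hs => mul_ne_zero h02 (pow_ne_zero _ hs)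
  rw [theta_mul_theta hxt hxt' h0 hq h0 hq]
  rw [tsum_partition (r := 2) (fun k p => ![(p.1 + 1 + p.2, p.1 + 1 - p.2),
    (p.1 + p.2 + 1, p.1 - p.2)] k) ?_ (theta_mul_summable hxt hxt' h0 hq)]
  · rw [Fin.sum_univ_two, thetaOdd, thetaEven, thetaOdd, thetaEven, mul_add]
    have tt : ∀ j : ℤ, 2 * triZ j + j = j ^ 2 := fun j => by rw [two_mul_triZ]; ring
    have pw : ∀ (s : ℂ), s ≠ 0 → ∀ j : ℤ, s ^ (2 * j) = (s ^ 2) ^ j := fun s _ j => by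
      rw [zpow_mul]; norm_cast
    have ge : ∀ (s : ℂ), s ≠ 0 → ∀ j : ℤ, (q ^ 2) ^ triZ j * (q * s ^ 2) ^ j =
        q ^ (j ^ 2) * s ^ (2 * j) := fun s hs j => by
      rw [← tt, zpow_add₀ h0, mul_zpow, pw q h0, pw s hs]; ring
    have go : ∀ (s : ℂ), s ≠ 0 → ∀ j : ℤ, (q ^ 2) ^ triZ j * (q ^ 2 * s ^ 2) ^ j =
        q ^ (j ^ 2 + j) * s ^ (2 * j) := fun s hs j => by
      rw [← tt, show 2 * triZ j + j + j = 2 * triZ j + 2 * j by ring, zpow_add₀ h0, mul_zpow,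
        pw q h0, pw s hs, pw q h0]; ring
    congr 1
    · rw [show x * (x * theta (q ^ 2 * x ^ 2) (q ^ 2) * theta (q * t ^ 2) (q ^ 2)) =
        x ^ 2 * (theta (q ^ 2 * x ^ 2) (q ^ 2) * theta (q * t ^ 2) (q ^ 2)) by ring,
        theta_mul_theta (a2 x hx) (a1 t ht) h02 hq2 h02 hq2, ← tsum_mul_left]
      refine tsum_congr fun p => ?_
      obtain ⟨i, j⟩ := p
      simp only [Matrix.cons_val_zero]
      rw [go x hx, ge t ht, mul_zpow, div_zpow]
      have e : triZ (i + 1 + j) + triZ (i + 1 - j) = (i ^ 2 + i) + j ^ 2 := by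
        have b1 := two_mul_triZ (i + 1 + j)
        have b2 := two_mul_triZ (i + 1 - j)
        have : 2 * (triZ (i + 1 + j) + triZ (i + 1 - j)) = 2 * ((i ^ 2 + i) + j ^ 2) := by
          linear_combination b1 + b2
        omega
      have e1 : q ^ triZ (i + 1 + j) * q ^ triZ (i + 1 - j) = q ^ (i ^ 2 + i) * q ^ (j ^ 2) := by
        rw [← zpow_add₀ h0, e, zpow_add₀ h0]
      have e2 : x ^ (i + 1 + j) * x ^ (i + 1 - j) = x ^ 2 * x ^ (2 * i) := by
        rw [← zpow_add₀ hx, ← zpow_natCast x 2, ← zpow_add₀ hx]; congr 1; push_cast; ring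
      have e3 : t ^ (i + 1 + j) * (t ^ (i + 1 - j))⁻¹ = t ^ (2 * j) := by
        rw [← zpow_neg, ← zpow_add₀ ht]; congr 1; ring
      calc _ = (q ^ triZ (i + 1 + j) * q ^ triZ (i + 1 - j)) *
            (x ^ (i + 1 + j) * x ^ (i + 1 - j)) * (t ^ (i + 1 + j) * (t ^ (i + 1 - j))⁻¹) := by
            rw [div_eq_mul_inv]; ring
        _ = _ := by rw [e1, e2, e3]; ring
    · rw [show x * (theta (q * x ^ 2) (q ^ 2) * (t * theta (q ^ 2 * t ^ 2) (q ^ 2))) =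
        (x * t) * (theta (q * x ^ 2) (q ^ 2) * theta (q ^ 2 * t ^ 2) (q ^ 2)) by ring,
        theta_mul_theta (a1 x hx) (a2 t ht) h02 hq2 h02 hq2, ← tsum_mul_left]
      refine tsum_congr fun p => ?_
      obtain ⟨i, j⟩ := p
      simp only [Matrix.cons_val_one, Matrix.cons_val_fin_one]
      rw [ge x hx, go t ht, mul_zpow, div_zpow]
      have e : triZ (i + j + 1) + triZ (i - j) = i ^ 2 + (j ^ 2 + j) := by
        have b1 := two_mul_triZ (i + j + 1)
        have b2 := two_mul_triZ (i - j)
        have : 2 * (triZ (i + j + 1) + triZ (i - j)) = 2 * (i ^ 2 + (j ^ 2 + j)) := by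
          linear_combination b1 + b2
        omega
      have e1 : q ^ triZ (i + j + 1) * q ^ triZ (i - j) = q ^ (i ^ 2) * q ^ (j ^ 2 + j) := by
        rw [← zpow_add₀ h0, e, zpow_add₀ h0]
      have e2 : x ^ (i + j + 1) * x ^ (i - j) = x * x ^ (2 * i) := by
        rw [← zpow_add₀ hx, ← zpow_one_add₀ hx]; congr 1; ring
      have e3 : t ^ (i + j + 1) * (t ^ (i - j))⁻¹ = t * t ^ (2 * j) := by
        rw [← zpow_neg, ← zpow_add₀ ht, ← zpow_one_add₀ ht]; congr 1; ring
      calc _ = (q ^ triZ (i + j + 1) * q ^ triZ (i - j)) *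
            (x ^ (i + j + 1) * x ^ (i - j)) * (t ^ (i + j + 1) * (t ^ (i - j))⁻¹) := by
            rw [div_eq_mul_inv]; ring
        _ = _ := by rw [e1, e2, e3]; ring
  · constructor
    · rintro ⟨k, i, j⟩ ⟨k', i', j'⟩ h
      fin_cases k <;> fin_cases k' <;> simp [Prod.ext_iff] at h ⊢ <;> omega
    · rintro ⟨m, n⟩
      rcases Int.emod_two_eq_zero_or_one (m + n) with h | h
      · exact ⟨(0, ((m + n) / 2 - 1, (m - n) / 2)), by simp [Prod.ext_iff]; omega⟩
      · exact ⟨(1, ((m + n) / 2, (m - n) / 2)), by simp [Prod.ext_iff]; omega⟩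

lemma theta_addition' {x t q : ℂ} (hx : x ≠ 0) (ht : t ≠ 0) (h0 : q ≠ 0) (hq : ‖q‖ < 1) :
    theta (-(x * t)) q * theta (-(x / t)) q =
      x * (thetaOdd x q * thetaEven t q - thetaEven x q * thetaOdd t q) := by
  have := theta_addition (neg_ne_zero.2 hx) ht h0 hq
  rw [neg_mul, neg_div] at this
  rw [this]
  simp only [thetaOdd, thetaEven, neg_sq]
  ring

/-- **Weierstrass three-term relation**: the Plücker relation for the vectors
`(thetaOdd, thetaEven)` at `x`, `y`, `t`, `1`. -/
lemma weierstrass_three_term {x y t q : ℂ} (hx : x ≠ 0) (hy : y ≠ 0) (ht : t ≠ 0) (h0 : q ≠ 0)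
    (hq : ‖q‖ < 1) :
    theta (-(x * t)) q * theta (-(x / t)) q * theta (-y) q ^ 2 -
      theta (-(y * t)) q * theta (-(y / t)) q * theta (-x) q ^ 2 =
    y / t * (theta (-(x * y)) q * theta (-(x / y)) q) * theta (-t) q ^ 2 := by
  have sq : ∀ z : ℂ, z ≠ 0 → theta (-z) q ^ 2 =
      z * (thetaOdd z q * thetaEven 1 q - thetaEven z q * thetaOdd 1 q) := by
    intro z hz
    have := theta_addition' hz one_ne_zero h0 hq
    rw [mul_one, div_one] at this
    rw [← this, _root_.sq]
  rw [sq x hx, sq y hy, sq t ht, theta_addition' hx ht h0 hq, theta_addition' hy ht h0 hq,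
    theta_addition' hx hy h0 hq]
  field_simp
  ring

/-- The logarithmic derivative at `0` of `s ↦ ∏ (1 - s vₙ)`. -/
lemma hasDerivAt_tprod {v : ℕ → ℂ} (hv : Summable fun n => ‖v n‖) :
    HasDerivAt (fun s : ℂ => ∏' n, (1 - s * v n)) (-∑' n, v n) 0 := by
  have hv' : Summable v := hv.of_norm
  set C := ∑' n, ‖v n‖ with hC
  have hC0 : 0 ≤ C := tsum_nonneg fun _ => norm_nonneg _
  have hfin : ∀ (a : ℕ → ℂ) (N : ℕ), ‖∏ n ∈ Finset.range N, (1 + a n) - 1 -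
      ∑ n ∈ Finset.range N, a n‖ ≤
      ∏ n ∈ Finset.range N, (1 + ‖a n‖) - 1 - ∑ n ∈ Finset.range N, ‖a n‖ := by
    intro a N
    induction N with
    | zero => simp
    | succ N ih =>
      rw [Finset.prod_range_succ, Finset.prod_range_succ, Finset.sum_range_succ,
        Finset.sum_range_succ]
      have h1 : ‖∏ n ∈ Finset.range N, (1 + a n) - 1‖ ≤
          ∏ n ∈ Finset.range N, (1 + ‖a n‖) - 1 := by
        have h := norm_add_le (∏ n ∈ Finset.range N, (1 + a n) - 1 - ∑ n ∈ Finset.range N, a n)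
          (∑ n ∈ Finset.range N, a n)
        rw [sub_add_cancel] at h
        linarith [norm_sum_le (Finset.range N) a]
      have h2 : (∏ n ∈ Finset.range N, (1 + a n)) * (1 + a N) - 1 -
          (∑ n ∈ Finset.range N, a n + a N) =
          (∏ n ∈ Finset.range N, (1 + a n) - 1 - ∑ n ∈ Finset.range N, a n) +
          (∏ n ∈ Finset.range N, (1 + a n) - 1) * a N := by ring
      rw [h2]
      refine (norm_add_le _ _).trans ?_
      rw [norm_mul]
      nlinarith [mul_le_mul_of_nonneg_right h1 (norm_nonneg (a N))]
  have hbound : ∀ s : ℂ, ‖∏' n, (1 - s * v n) - 1 + s * ∑' n, v n‖ ≤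
      Real.exp (‖s‖ * C) - 1 - ‖s‖ * C := by
    intro s
    have hs : Summable fun n => ‖-(s * v n)‖ := by
      simp only [norm_neg, norm_mul]; exact hv.mul_left _
    have hm : Multipliable fun n => (1 - s * v n) := by
      simpa only [sub_eq_add_neg] using multipliable_one_add_of_summable hs
    have l1 := ((hm.hasProd.tendsto_prod_nat.sub_const 1).add
      ((hv'.hasSum.tendsto_sum_nat).const_mul s)).norm
    have l2 : Tendsto (fun N => Real.exp (‖s‖ * C) - 1 -
        ‖s‖ * ∑ n ∈ Finset.range N, ‖v n‖) atTop (𝓝 (Real.exp (‖s‖ * C) - 1 - ‖s‖ * C)) :=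
      (hv.hasSum.tendsto_sum_nat.const_mul _).const_sub _
    refine le_of_tendsto_of_tendsto' l1 l2 fun N => ?_
    have := hfin (fun n => -(s * v n)) N
    simp only [Finset.sum_neg_distrib, ← Finset.mul_sum, norm_neg, norm_mul, sub_neg_eq_add,
      ← sub_eq_add_neg] at this
    refine this.trans ?_
    have e : ∏ n ∈ Finset.range N, (1 + ‖s‖ * ‖v n‖) ≤ Real.exp (‖s‖ * C) := by
      refine (Real.prod_one_add_le_exp_sum _ fun n => by positivity).trans ?_
      rw [← Finset.mul_sum]
      gcongr
      exact hv.sum_le_tsum _ fun _ _ => norm_nonneg _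
    linarith
  have hexp : (fun s : ℂ => Real.exp (‖s‖ * C) - 1 - ‖s‖ * C) =o[𝓝 0] fun s : ℂ => s := by
    have h := (Real.hasDerivAt_exp 0).isLittleO
    simp only [sub_zero, Real.exp_zero, smul_eq_mul, mul_one] at h
    have ht : Tendsto (fun s : ℂ => ‖s‖ * C) (𝓝 0) (𝓝 0) := by
      have : Continuous fun s : ℂ => ‖s‖ * C := by fun_prop
      simpa using this.tendsto 0
    refine (h.comp_tendsto ht).trans_isBigO ?_
    refine Asymptotics.IsBigO.of_bound C (Eventually.of_forall fun s => ?_)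
    simp only [Function.comp_apply, norm_mul, norm_norm, Real.norm_of_nonneg hC0]
    rw [mul_comm]
  rw [hasDerivAt_iff_isLittleO]
  simp only [zero_mul, sub_zero, tprod_one, smul_eq_mul, mul_neg, sub_neg_eq_add]
  exact (Asymptotics.IsBigO.of_bound 1 (Eventually.of_forall fun s => by
    rw [one_mul]; exact (hbound s).trans (le_abs_self _))).trans_isLittleO hexp

/-- The half Lambert series `∑_{n ≥ 0} x qⁿ / (1 - x qⁿ)²`. -/
noncomputable def lam (x q : ℂ) : ℂ := ∑' n : ℕ, x * q ^ n / (1 - x * q ^ n) ^ 2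

lemma lam_summable (x : ℂ) {q : ℂ} (hq : ‖q‖ < 1) :
    Summable fun n : ℕ => ‖x * q ^ n / (1 - x * q ^ n) ^ 2‖ := by
  have h1 : Tendsto (fun n : ℕ => ((1 - x * q ^ n) ^ 2)⁻¹) atTop (𝓝 ((1 - x * 0) ^ 2)⁻¹) :=
    ((((tendsto_pow_atTop_nhds_zero_of_norm_lt_one hq).const_mul x).const_sub 1).pow 2).inv₀
      (by simp)
  have h2 : Summable fun n : ℕ => ‖x * q ^ n‖ := by
    simpa only [norm_neg] using qPoch_summable x hq
  simp only [div_eq_mul_inv]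
  simp only [norm_mul] at h2 ⊢
  refine Summable.mul_tendsto_const (c := ‖((1 - x * 0) ^ 2)⁻¹‖) ?_ ?_
  · simpa only [norm_mul, norm_norm] using h2
  · rw [Nat.cofinite_eq_atTop]
    exact h1.norm

/-- The deformed product `∏ (1 - s x qⁿ / (1 - x qⁿ)²)`. -/
noncomputable def defProd (x q s : ℂ) : ℂ := ∏' n : ℕ, (1 - s * (x * q ^ n / (1 - x * q ^ n) ^ 2))

lemma defProd_hasDerivAt (x : ℂ) {q : ℂ} (hq : ‖q‖ < 1) :
    HasDerivAt (defProd x q) (-lam x q) 0 := hasDerivAt_tprod (lam_summable x hq)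

lemma defProd_zero (x q : ℂ) : defProd x q 0 = 1 := by simp [defProd]

lemma qPoch_mul_div {x t q s : ℂ} (hq : ‖q‖ < 1) (ht : t ≠ 0) (hs : t ^ 2 - (2 + s) * t + 1 = 0)
    (hx : ∀ n : ℕ, x * q ^ n ≠ 1) :
    qPoch (x * t) q * qPoch (x / t) q = qPoch x q ^ 2 * defProd x q s := by
  have hsum : Summable fun n : ℕ => ‖-(s * (x * q ^ n / (1 - x * q ^ n) ^ 2))‖ := by
    simp only [norm_neg, norm_mul s]
    exact (lam_summable x hq).mul_left _
  have hm : Multipliable fun n : ℕ => (1 - s * (x * q ^ n / (1 - x * q ^ n) ^ 2)) := by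
    simpa only [sub_eq_add_neg] using multipliable_one_add_of_summable hsum
  refine tendsto_nhds_unique ((qPoch_tendsto (x * t) hq).mul (qPoch_tendsto (x / t) hq))
    ((((qPoch_tendsto x hq).pow 2).mul hm.hasProd.tendsto_prod_nat).congr fun N => ?_)
  rw [← Finset.prod_pow, ← Finset.prod_mul_distrib, ← Finset.prod_mul_distrib]
  refine Finset.prod_congr rfl fun n _ => ?_
  have h1 : 1 - x * q ^ n ≠ 0 := sub_ne_zero.2 (hx n).symm
  field_simp
  linear_combination (x * q ^ n) * hs

/-! ### The difference of two values of the Weierstrass function -/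

lemma theta_neg {z q : ℂ} (hz : z ≠ 0) (h0 : q ≠ 0) (hq : ‖q‖ < 1) :
    theta (-z) q = qPoch q q * qPoch z q * qPoch (q / z) q := by
  rw [jacobi_triple (neg_ne_zero.2 hz) h0 hq, neg_neg, neg_div_neg_eq]

lemma theta_neg_mul_div {x t q s : ℂ} (hx : x ≠ 0) (ht : t ≠ 0) (h0 : q ≠ 0) (hq : ‖q‖ < 1)
    (hs : t ^ 2 - (2 + s) * t + 1 = 0) (hx1 : ∀ n : ℕ, x * q ^ n ≠ 1)
    (hx2 : ∀ n : ℕ, q / x * q ^ n ≠ 1) :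
    theta (-(x * t)) q * theta (-(x / t)) q =
      theta (-x) q ^ 2 * (defProd x q s * defProd (q / x) q s) := by
  rw [theta_neg (mul_ne_zero hx ht) h0 hq, theta_neg (div_ne_zero hx ht) h0 hq, theta_neg hx h0 hq,
    show q / (x * t) = q / x / t by field_simp, show q / (x / t) = q / x * t by field_simp]
  linear_combination qPoch q q ^ 2 * (qPoch (q / x * t) q * qPoch (q / x / t) q) *
    qPoch_mul_div hq ht hs hx1 +
    qPoch q q ^ 2 * (qPoch x q ^ 2 * defProd x q s) * qPoch_mul_div hq ht hs hx2

/-- The classical formula for `℘(u) - ℘(v)` as a quotient of theta functions, with `℘` replaced by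
its Lambert series. It is the first-order term at `t = 1` of the three-term relation. -/
theorem lam_sub_lam {x y q : ℂ} (hx : x ≠ 0) (hy : y ≠ 0) (h0 : q ≠ 0) (hq : ‖q‖ < 1)
    (hx1 : ∀ n : ℕ, x * q ^ n ≠ 1) (hx2 : ∀ n : ℕ, q / x * q ^ n ≠ 1)
    (hy1 : ∀ n : ℕ, y * q ^ n ≠ 1) (hy2 : ∀ n : ℕ, q / y * q ^ n ≠ 1) :
    (lam x q + lam (q / x) q - (lam y q + lam (q / y) q)) * theta (-x) q ^ 2 * theta (-y) q ^ 2 =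
      -y * qPoch q q ^ 6 * (theta (-(x * y)) q * theta (-(x / y)) q) := by
  have hqq : ∀ n : ℕ, q * q ^ n ≠ 1 := mul_pow_ne_one hq hq
  have key : ∀ s : ℂ, theta (-x) q ^ 2 * theta (-y) q ^ 2 *
      (defProd x q s * defProd (q / x) q s - defProd y q s * defProd (q / y) q s) =
      s * (y * (theta (-(x * y)) q * theta (-(x / y)) q) * qPoch q q ^ 6 *
        defProd q q s ^ 2) := by
    intro s
    -- the parameter `t` with `t + 1/t = 2 + s` turns `(1-xt)(1-x/t)` into `(1-x)² - s x`
    obtain ⟨t, ht⟩ : ∃ t : ℂ, t ^ 2 - (2 + s) * t + 1 = 0 := by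
      obtain ⟨r, hr⟩ := IsAlgClosed.exists_pow_nat_eq (s ^ 2 + 4 * s) (n := 2) two_pos
      exact ⟨(2 + s + r) / 2, by linear_combination hr / 4⟩
    have ht0 : t ≠ 0 := by rintro rfl; simp at ht
    have h3 := weierstrass_three_term hx hy ht0 h0 hq
    rw [theta_neg_mul_div hx ht0 h0 hq ht hx1 hx2, theta_neg_mul_div hy ht0 h0 hq ht hy1 hy2] at h3
    have h4 : theta (-t) q = (1 - t) * qPoch q q ^ 3 * defProd q q s := by
      rw [theta_neg ht0 h0 hq, qPoch_step t hq, mul_comm t q]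
      linear_combination (1 - t) * qPoch q q * qPoch_mul_div hq ht0 ht hqq
    have h5 : (1 - t) ^ 2 = s * t := by linear_combination ht
    rw [h4, mul_pow, mul_pow, h5] at h3
    have h6 : y / t * (theta (-(x * y)) q * theta (-(x / y)) q) *
        (s * t * (qPoch q q ^ 3) ^ 2 * defProd q q s ^ 2) = s * (y * (theta (-(x * y)) q *
        theta (-(x / y)) q) * qPoch q q ^ 6 * defProd q q s ^ 2) := by
      field_simp
    rw [h6] at h3
    linear_combination h3
  have dx := (defProd_hasDerivAt x hq).mul (defProd_hasDerivAt (q / x) hq)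
  have dy := (defProd_hasDerivAt y hq).mul (defProd_hasDerivAt (q / y) hq)
  have d1 := (dx.sub dy).const_mul (theta (-x) q ^ 2 * theta (-y) q ^ 2)
  have d2 := (hasDerivAt_id (0 : ℂ)).mul (((defProd_hasDerivAt q hq).pow 2).const_mul
    (y * (theta (-(x * y)) q * theta (-(x / y)) q) * qPoch q q ^ 6))
  have d3 := d1.unique (d2.congr_of_eventuallyEq (Eventually.of_forall fun s => by
    simpa using key s))
  simp only [defProd_zero, id] at d3
  simp at d3
  rw [defProd_zero] at d3
  linear_combination -d3

/-! ### Eta quotients and the Lambert series in base `q^10` -/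

/-- Gauss's product `∑ q^{n(n-1)/2} = 2 (q²; q²)² / (q; q)`, the sum being over `ℤ`. -/
lemma theta_one_mul {q : ℂ} (h0 : q ≠ 0) (hq : ‖q‖ < 1) :
    theta 1 q * qPoch q q = 2 * qPoch (q ^ 2) (q ^ 2) ^ 2 := by
  rw [jacobi_triple one_ne_zero h0 hq, div_one, qPoch_step (-1) hq, ← qPoch_mul_neg q hq]
  rw [show (-1 : ℂ) * q = -q by ring]
  ring

lemma norm_pow_lt_one {q : ℂ} (hq : ‖q‖ < 1) {k : ℕ} (hk : k ≠ 0) : ‖q ^ k‖ < 1 := by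
  rw [norm_pow]; exact pow_lt_one₀ (norm_nonneg _) hq hk

lemma pow_mul_pow_ne_one {q : ℂ} (hq : ‖q‖ < 1) {j : ℕ} (hj : j ≠ 0) (k n : ℕ) :
    q ^ j * (q ^ k) ^ n ≠ 1 := by
  rw [← pow_mul, ← pow_add]
  intro h
  have := norm_pow_lt_one hq (k := j + k * n) (by omega)
  rw [h, norm_one] at this
  exact lt_irrefl _ this

/-- `(q;q)` through the products `(q^j;q^10)`; likewise for `(q²;q²)` and `(q⁵;q⁵)` below. -/
lemma eta_one (q : ℂ) (hq : ‖q‖ < 1) : qPoch q q =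
    qPoch q (q ^ 10) * qPoch (q ^ 2) (q ^ 10) * qPoch (q ^ 3) (q ^ 10) * qPoch (q ^ 4) (q ^ 10) *
    qPoch (q ^ 5) (q ^ 10) * qPoch (q ^ 6) (q ^ 10) * qPoch (q ^ 7) (q ^ 10) *
    qPoch (q ^ 8) (q ^ 10) * qPoch (q ^ 9) (q ^ 10) * qPoch (q ^ 10) (q ^ 10) := by
  rw [qPoch_dissect q hq 10 (by norm_num)]
  simp only [Finset.prod_range_succ, Finset.prod_range_zero, one_mul]
  ring_nf

lemma eta_two (q : ℂ) (hq : ‖q‖ < 1) : qPoch (q ^ 2) (q ^ 2) =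
    qPoch (q ^ 2) (q ^ 10) * qPoch (q ^ 4) (q ^ 10) * qPoch (q ^ 6) (q ^ 10) *
    qPoch (q ^ 8) (q ^ 10) * qPoch (q ^ 10) (q ^ 10) := by
  rw [qPoch_dissect (q ^ 2) (norm_pow_lt_one hq two_ne_zero) 5 (by norm_num)]
  simp only [Finset.prod_range_succ, Finset.prod_range_zero, one_mul, ← pow_mul, ← pow_add]

lemma eta_five (q : ℂ) (hq : ‖q‖ < 1) : qPoch (q ^ 5) (q ^ 5) =
    qPoch (q ^ 5) (q ^ 10) * qPoch (q ^ 10) (q ^ 10) := by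
  rw [qPoch_dissect (q ^ 5) (norm_pow_lt_one hq (by norm_num)) 2 (by norm_num)]
  simp only [Finset.prod_range_succ, Finset.prod_range_zero, one_mul, ← pow_mul, ← pow_add]

lemma eta_ne {q : ℂ} (hq : ‖q‖ < 1) {j : ℕ} (hj : j ≠ 0) {k : ℕ} (hk : k ≠ 0) :
    qPoch (q ^ j) (q ^ k) ≠ 0 :=
  qPoch_ne_zero _ (norm_pow_lt_one hq hk) (pow_mul_pow_ne_one hq hj k)

/-- The series `∑ q^{triZ m + triZ n}` over the pairs with `m + 2n ≡ k` modulo `5`, which is the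
same for `k = 0, 1, 2, 3` (see `theta_split`), in factored form. -/
noncomputable def thetaT (q : ℂ) : ℂ := theta (q ^ 3) (q ^ 5) * theta q (q ^ 5)

lemma thetaT_mul {q : ℂ} (h0 : q ≠ 0) (hq : ‖q‖ < 1) :
    thetaT q * (qPoch q q * qPoch (q ^ 10) (q ^ 10)) =
      qPoch (q ^ 2) (q ^ 2) * qPoch (q ^ 5) (q ^ 5) ^ 3 := by
  have hq5 := norm_pow_lt_one hq (k := 5) (by norm_num)
  have e1 := qPoch_mul_neg q hq
  have e5 := qPoch_mul_neg (q ^ 5) hq5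
  have d := qPoch_dissect (-q) hq 5 (by norm_num)
  simp only [Finset.prod_range_succ, Finset.prod_range_zero, one_mul, pow_zero, mul_one] at d
  have c : ∀ k, -q * q ^ k = -q ^ (k + 1) := fun k => by ring
  rw [c, c, c, c] at d
  rw [← pow_mul] at e5
  rw [thetaT, jacobi_triple (pow_ne_zero 3 h0) (pow_ne_zero 5 h0) hq5,
    jacobi_triple h0 (pow_ne_zero 5 h0) hq5, show -q ^ 5 / q ^ 3 = -q ^ 2 by field_simp,
    show -q ^ 5 / q = -q ^ 4 by field_simp]
  rw [← e1, d]
  norm_num at e5 ⊢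
  rw [← e5]
  ring

/-- `lam_sub_lam` in base `q^10` at `x = q³`, `y = q`, rewritten in terms of theta series. -/
lemma lambertB_eq {q : ℂ} (h0 : q ≠ 0) (hq : ‖q‖ < 1) :
    4 * (lam q (q ^ 10) + lam (q ^ 9) (q ^ 10) - (lam (q ^ 3) (q ^ 10) + lam (q ^ 7) (q ^ 10))) =
      q * theta 1 q * theta 1 (q ^ 5) * thetaT q := by
  have hq5 := norm_pow_lt_one hq (k := 5) (by norm_num)
  have hq10 := norm_pow_lt_one hq (k := 10) (by norm_num)
  have d : ∀ j k : ℕ, j ≤ k → q ^ k / q ^ j = q ^ (k - j) := fun j k h => by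
    rw [pow_sub₀ _ h0 h, div_eq_mul_inv]
  have d' : q ^ 10 / q = q ^ 9 := by simpa using d 1 10 (by norm_num)
  have w := lam_sub_lam (x := q ^ 3) (y := q) (q := q ^ 10) (pow_ne_zero _ h0) h0
    (pow_ne_zero _ h0) hq10 (pow_mul_pow_ne_one hq (by norm_num) 10)
    (by rw [d 3 10 (by norm_num)]; exact pow_mul_pow_ne_one hq (by norm_num) 10)
    (by simpa using pow_mul_pow_ne_one hq one_ne_zero 10)
    (by rw [d']; exact pow_mul_pow_ne_one hq (by norm_num) 10)
  rw [show q ^ 3 / q = q ^ 2 by field_simp, show q ^ 3 * q = q ^ 4 by ring] at w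
  rw [theta_neg (pow_ne_zero _ h0) (pow_ne_zero _ h0) hq10, theta_neg h0 (pow_ne_zero _ h0) hq10,
    theta_neg (pow_ne_zero _ h0) (pow_ne_zero _ h0) hq10,
    theta_neg (pow_ne_zero _ h0) (pow_ne_zero _ h0) hq10, d', d 3 10 (by norm_num),
    d 4 10 (by norm_num), d 2 10 (by norm_num)] at w
  norm_num at w
  have t1 := theta_one_mul h0 hq
  have t5 := theta_one_mul (pow_ne_zero 5 h0) hq5
  have tT := thetaT_mul h0 hq
  rw [← pow_mul] at t5
  norm_num at t5
  have n1 : qPoch q (q ^ 10) ≠ 0 := by simpa using eta_ne hq one_ne_zero (k := 10) (by norm_num)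
  have n2 := eta_ne hq (j := 2) (by norm_num) (k := 10) (by norm_num)
  have n3 := eta_ne hq (j := 3) (by norm_num) (k := 10) (by norm_num)
  have n4 := eta_ne hq (j := 4) (by norm_num) (k := 10) (by norm_num)
  have n5 := eta_ne hq (j := 5) (by norm_num) (k := 10) (by norm_num)
  have n6 := eta_ne hq (j := 6) (by norm_num) (k := 10) (by norm_num)
  have n7 := eta_ne hq (j := 7) (by norm_num) (k := 10) (by norm_num)
  have n8 := eta_ne hq (j := 8) (by norm_num) (k := 10) (by norm_num)
  have n9 := eta_ne hq (j := 9) (by norm_num) (k := 10) (by norm_num)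
  have n10 := eta_ne hq (j := 10) (by norm_num) (k := 10) (by norm_num)
  rw [eta_one q hq, eta_two q hq] at t1
  rw [eta_five q hq] at t5
  rw [eta_one q hq, eta_two q hq, eta_five q hq] at tT
  generalize qPoch q (q ^ 10) = a1 at *
  generalize qPoch (q ^ 2) (q ^ 10) = a2 at *
  generalize qPoch (q ^ 3) (q ^ 10) = a3 at *
  generalize qPoch (q ^ 4) (q ^ 10) = a4 at *
  generalize qPoch (q ^ 5) (q ^ 10) = a5 at *
  generalize qPoch (q ^ 6) (q ^ 10) = a6 at *
  generalize qPoch (q ^ 7) (q ^ 10) = a7 at *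
  generalize qPoch (q ^ 8) (q ^ 10) = a8 at *
  generalize qPoch (q ^ 9) (q ^ 10) = a9 at *
  generalize qPoch (q ^ 10) (q ^ 10) = a10 at *
  generalize lam q (q ^ 10) = l1 at *
  generalize lam (q ^ 3) (q ^ 10) = l3 at *
  generalize lam (q ^ 7) (q ^ 10) = l7 at *
  generalize lam (q ^ 9) (q ^ 10) = l9 at *
  have t1' : theta 1 q = 2 * (a2 * a4 * a6 * a8 * a10) / (a1 * a3 * a5 * a7 * a9) := by
    rw [eq_div_iff (by positivity)]
    refine mul_right_cancel₀ (b := a2 * a4 * a6 * a8 * a10) (by positivity) ?_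
    linear_combination t1
  have t5' : theta 1 (q ^ 5) = 2 * a10 / a5 := by
    rw [eq_div_iff (by positivity)]
    refine mul_right_cancel₀ (b := a10) (by positivity) ?_
    linear_combination t5
  have tT' : thetaT q = a5 ^ 2 * a10 ^ 2 / (a1 * a3 * a7 * a9) := by
    rw [eq_div_iff (by positivity)]
    refine mul_right_cancel₀ (b := (a2 * a4 * a6 * a8 * a10) * a5 * a10) (by positivity) ?_
    linear_combination tT
  have w' : l1 + l9 - (l3 + l7) = q * a10 ^ 4 * (a2 * a4 * a6 * a8) / (a1 * a3 * a7 * a9) ^ 2 := by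
    rw [eq_div_iff (by positivity)]
    refine mul_right_cancel₀ (b := a10 ^ 4) (by positivity) ?_
    linear_combination -w
  rw [w', t1', t5', tT']
  field_simp
  ring

/-! ### The Lambert series at fifth roots of unity -/

/-- `lam_sub_lam` in base `q²` at `x = ζ² q`, `y = ζ q`, rewritten in terms of theta series. The
products over the fifth roots of unity collapse by `qPoch_zeta`. -/
lemma lambertA_eq {q ζ : ℂ} (h0 : q ≠ 0) (hq : ‖q‖ < 1) (hζ : 1 + ζ + ζ ^ 2 + ζ ^ 3 + ζ ^ 4 = 0) :
    4 * (lam (ζ * q) (q ^ 2) + lam (ζ ^ 4 * q) (q ^ 2) -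
      (lam (ζ ^ 2 * q) (q ^ 2) + lam (ζ ^ 3 * q) (q ^ 2))) =
      q * (ζ + ζ ^ 4 - ζ ^ 2 - ζ ^ 3) * theta 1 q * theta 1 (q ^ 5) *
        (-(ζ * (theta ζ q * theta (ζ ^ 2) q))) := by
  have hq2 := norm_pow_lt_one hq (k := 2) (by norm_num)
  have hq5 := norm_pow_lt_one hq (k := 5) (by norm_num)
  have z5 : ζ ^ 5 = 1 := by linear_combination (ζ - 1) * hζ
  have zn : ‖ζ‖ = 1 := by
    have : ‖ζ‖ ^ 5 = 1 := by rw [← norm_pow, z5, norm_one]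
    exact (pow_eq_one_iff_of_nonneg (norm_nonneg _) (by norm_num)).1 this
  have z0 : ζ ≠ 0 := by rintro rfl; simp at hζ
  have zq : ∀ j n : ℕ, ζ ^ j * q * (q ^ 2) ^ n ≠ 1 := by
    intro j n h
    have := congrArg norm h
    rw [norm_mul, norm_mul, norm_pow, norm_pow, zn, one_pow, one_mul, norm_one] at this
    have h3 : ‖q ^ 2‖ ^ n ≤ 1 := pow_le_one₀ (norm_nonneg _) hq2.le
    nlinarith [norm_nonneg q]
  have zz : ∀ j : ℕ, ¬ 5 ∣ j → ζ ^ j ≠ 1 := by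
    intro j hj h
    have h1 : ζ ^ (j % 5) = 1 := by
      rw [← Nat.div_add_mod j 5, pow_add, pow_mul, z5, one_pow, one_mul] at h; exact h
    have h2 : ζ = 1 := by
      have : j % 5 = 1 ∨ j % 5 = 2 ∨ j % 5 = 3 ∨ j % 5 = 4 := by omega
      rcases this with h | h | h | h <;> rw [h] at h1
      · simpa using h1
      · linear_combination -ζ * (ζ ^ 2 + 1) * h1 + z5
      · linear_combination (ζ ^ 3 + 1) * h1 - ζ * z5
      · linear_combination -ζ * h1 + z5
    rw [h2] at hζ; norm_num at hζ
  have w := lam_sub_lam (x := ζ ^ 2 * q) (y := ζ * q) (q := q ^ 2) (mul_ne_zero (pow_ne_zero _ z0) h0)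
    (mul_ne_zero z0 h0) (pow_ne_zero _ h0) hq2 (zq 2)
    (by
      rw [show q ^ 2 / (ζ ^ 2 * q) = ζ ^ 3 * q by
        field_simp; linear_combination (-1 : ℂ) * z5]
      exact zq 3)
    (by simpa using zq 1)
    (by
      rw [show q ^ 2 / (ζ * q) = ζ ^ 4 * q by
        field_simp; linear_combination (-1 : ℂ) * z5]
      exact zq 4)
  rw [show ζ ^ 2 * q / (ζ * q) = ζ by field_simp,
    show ζ ^ 2 * q * (ζ * q) = ζ ^ 3 * q ^ 2 by ring] at w
  rw [theta_neg (mul_ne_zero (pow_ne_zero _ z0) h0) (pow_ne_zero _ h0) hq2,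
    theta_neg (mul_ne_zero z0 h0) (pow_ne_zero _ h0) hq2,
    theta_neg (mul_ne_zero (pow_ne_zero _ z0) (pow_ne_zero _ h0)) (pow_ne_zero _ h0) hq2,
    theta_neg z0 (pow_ne_zero _ h0) hq2,
    show q ^ 2 / (ζ ^ 2 * q) = ζ ^ 3 * q by field_simp; linear_combination (-1 : ℂ) * z5,
    show q ^ 2 / (ζ * q) = ζ ^ 4 * q by field_simp; linear_combination (-1 : ℂ) * z5,
    show q ^ 2 / (ζ ^ 3 * q ^ 2) = ζ ^ 2 by field_simp; linear_combination (-1 : ℂ) * z5,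
    show q ^ 2 / ζ = ζ ^ 4 * q ^ 2 by field_simp; linear_combination (-1 : ℂ) * z5,
    qPoch_step ζ hq2, qPoch_step (ζ ^ 2) hq2] at w
  have p1 := qPoch_zeta hζ q hq2
  have p2 := qPoch_zeta hζ (q ^ 2) hq2
  have p3 := qPoch_zeta hζ (-q) hq
  have d1 := qPoch_dissect q hq 2 (by norm_num)
  have d5 := qPoch_dissect (q ^ 5) hq5 2 (by norm_num)
  have t1 := theta_one_mul h0 hq
  have t5 := theta_one_mul (pow_ne_zero 5 h0) hq5
  have m1 := qPoch_mul_neg q hq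
  have m5 := qPoch_mul_neg (q ^ 5) hq5
  have a1 : theta ζ q = qPoch q q * ((1 + ζ) * qPoch (ζ * -q) q) * qPoch (ζ ^ 4 * -q) q := by
    rw [jacobi_triple z0 h0 hq, qPoch_step (-ζ) hq, sub_neg_eq_add, neg_mul_comm,
      show -q / ζ = ζ ^ 4 * -q by field_simp; linear_combination z5]
  have a2 : theta (ζ ^ 2) q =
      qPoch q q * ((1 + ζ ^ 2) * qPoch (ζ ^ 2 * -q) q) * qPoch (ζ ^ 3 * -q) q := by
    rw [jacobi_triple (pow_ne_zero 2 z0) h0 hq, qPoch_step (-ζ ^ 2) hq, sub_neg_eq_add,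
      neg_mul_comm, show -q / ζ ^ 2 = ζ ^ 3 * -q by field_simp; linear_combination z5]
  simp only [Finset.prod_range_succ, Finset.prod_range_zero, one_mul, pow_zero, mul_one, pow_one]
    at d1 d5
  rw [← pow_two] at d1
  simp only [← pow_mul, ← pow_add, (show Odd 5 by decide).neg_pow] at p1 p2 p3 d5 t5 m5
  norm_num at p1 p2 p3 d5 t5 m5
  have n2 := eta_ne hq (j := 2) (by norm_num) (k := 2) (by norm_num)
  have n5 := eta_ne hq (j := 5) (by norm_num) (k := 5) (by norm_num)
  have n10 := eta_ne hq (j := 10) (by norm_num) (k := 10) (by norm_num)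
  have n1 : qPoch q q ≠ 0 := by simpa using eta_ne hq one_ne_zero (k := 1) (by norm_num)
  rw [a1, a2]
  generalize qPoch q q = f1 at *
  generalize qPoch (q ^ 2) (q ^ 2) = f2 at *
  generalize qPoch (q ^ 5) (q ^ 5) = f5 at *
  generalize qPoch (q ^ 10) (q ^ 10) = f10 at *
  generalize qPoch q (q ^ 2) = u at *
  generalize qPoch (q ^ 5) (q ^ 10) = v at *
  generalize qPoch (-q) q = N at *
  generalize qPoch (-q ^ 5) (q ^ 5) = M at *
  have hv : v = f5 / f10 := by rw [eq_div_iff n10, d5]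
  have hu : u = f1 / f2 := by rw [eq_div_iff n2, d1]
  have hN : N = f2 / f1 := by rw [eq_div_iff n1, ← m1, mul_comm]
  have hM : M = f10 / f5 := by rw [eq_div_iff n5, ← m5, mul_comm]
  have ht1 : theta 1 q = 2 * f2 ^ 2 / f1 := by rw [eq_div_iff n1, t1]
  have ht5 : theta 1 (q ^ 5) = 2 * f10 ^ 2 / f5 := by rw [eq_div_iff n5, t5]
  have e1 : qPoch (ζ * q) (q ^ 2) * qPoch (ζ ^ 2 * q) (q ^ 2) * qPoch (ζ ^ 3 * q) (q ^ 2) *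
      qPoch (ζ ^ 4 * q) (q ^ 2) = f5 * f2 / (f10 * f1) := by
    rw [hu, hv] at p1
    field_simp at p1 ⊢
    linear_combination p1
  have e2 : qPoch (ζ * q ^ 2) (q ^ 2) * qPoch (ζ ^ 2 * q ^ 2) (q ^ 2) *
      qPoch (ζ ^ 3 * q ^ 2) (q ^ 2) * qPoch (ζ ^ 4 * q ^ 2) (q ^ 2) = f10 / f2 := by
    field_simp
    linear_combination p2
  have e3 : qPoch (-(ζ * q)) q * qPoch (-(ζ ^ 2 * q)) q * qPoch (-(ζ ^ 3 * q)) q *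
      qPoch (-(ζ ^ 4 * q)) q = f10 * f1 / (f5 * f2) := by
    rw [hN, hM] at p3
    field_simp at p3 ⊢
    linear_combination p3
  have g1 : lam (ζ * q) (q ^ 2) + lam (ζ ^ 4 * q) (q ^ 2) -
      (lam (ζ ^ 2 * q) (q ^ 2) + lam (ζ ^ 3 * q) (q ^ 2)) =
      (ζ + ζ ^ 4 - ζ ^ 2 - ζ ^ 3) * q * f2 * f1 ^ 2 * f10 ^ 3 / f5 ^ 2 := by
    have w' : (lam (ζ ^ 2 * q) (q ^ 2) + lam (ζ ^ 3 * q) (q ^ 2) -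
        (lam (ζ * q) (q ^ 2) + lam (ζ ^ 4 * q) (q ^ 2))) * f2 ^ 4 *
        (f5 * f2 / (f10 * f1)) ^ 2 = -(ζ * (1 - ζ) * (1 - ζ ^ 2)) * q * f2 ^ 8 * (f10 / f2) := by
      rw [← e1, ← e2]
      linear_combination w
    rw [show ζ * (1 - ζ) * (1 - ζ ^ 2) = ζ + ζ ^ 4 - ζ ^ 2 - ζ ^ 3 by ring] at w'
    field_simp at w' ⊢
    linear_combination -w'
  rw [g1, ht1, ht5]
  have e4 : ζ * (f1 * ((1 + ζ) * qPoch (ζ * -q) q) * qPoch (ζ ^ 4 * -q) q *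
      (f1 * ((1 + ζ ^ 2) * qPoch (ζ ^ 2 * -q) q) * qPoch (ζ ^ 3 * -q) q)) =
      -(f1 ^ 2 * (f10 * f1 / (f5 * f2))) := by
    rw [← e3]
    simp only [mul_neg]
    have : ζ * (1 + ζ) * (1 + ζ ^ 2) = -1 := by linear_combination hζ
    linear_combination (f1 ^ 2 * (qPoch (-(ζ * q)) q * qPoch (-(ζ ^ 2 * q)) q *
      qPoch (-(ζ ^ 3 * q)) q * qPoch (-(ζ ^ 4 * q)) q)) * this
  rw [e4]
  field_simp
  ring

/-! ### Splitting a double theta series modulo `5` -/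

/-- Sorting the pairs `(m, n)` by `m + 2n` modulo `5`. The rotation `(m, n) ↦ (1 - n, m)` permutes
the classes `2, 0, 1, 3` cyclically, so each of them contributes `thetaT q`; on the class `4` the
substitution `2m-1 = U + 2V`, `2n-1 = 2U - V` gives `q * theta 1 (q ^ 5) ^ 2`. -/
lemma theta_split {q ζ : ℂ} (h0 : q ≠ 0) (hq : ‖q‖ < 1) (hζ : 1 + ζ + ζ ^ 2 + ζ ^ 3 + ζ ^ 4 = 0) :
    ζ * (theta ζ q * theta (ζ ^ 2) q) = q * theta 1 (q ^ 5) ^ 2 - thetaT q := by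
  have hq5 := norm_pow_lt_one hq (k := 5) (by norm_num)
  have h05 : q ^ 5 ≠ 0 := pow_ne_zero _ h0
  have z5 : ζ ^ 5 = 1 := by linear_combination (ζ - 1) * hζ
  have z0 : ζ ≠ 0 := by rintro rfl; simp at hζ
  have term : ∀ (m n c E : ℤ) (k : ℕ), triZ m + triZ n = E → m + 2 * n = k + 5 * c →
      (q ^ triZ m * ζ ^ m) * (q ^ triZ n * (ζ ^ 2) ^ n) = ζ ^ k * q ^ E := by
    intro m n c E k hE hk
    have : ζ ^ m * (ζ ^ 2) ^ n = ζ ^ k := by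
      rw [← zpow_natCast ζ 2, ← zpow_mul, ← zpow_add₀ z0]
      push_cast
      rw [hk, zpow_add₀ z0, zpow_mul, zpow_natCast]
      have : ζ ^ (5 : ℤ) = 1 := by exact_mod_cast z5
      rw [this, one_zpow, mul_one]
    rw [← hE, zpow_add₀ h0, ← this]
    ring
  have pw : ∀ (a b : ℤ) (j : ℕ), (q ^ 5) ^ a * (q ^ j) ^ b = q ^ (5 * a + j * b) := by
    intro a b j
    rw [zpow_add₀ h0, zpow_mul, zpow_mul]
    norm_cast
  have hT : thetaT q = ∑' p : ℤ × ℤ, q ^ (5 * triZ p.1 + 3 * p.1 + (5 * triZ p.2 + p.2)) := by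
    rw [thetaT, theta_mul_theta (pow_ne_zero 3 h0) h0 h05 hq5 h05 hq5]
    refine tsum_congr fun p => ?_
    have := pw (triZ p.2) p.2 1
    rw [pow_one] at this
    rw [pw, this, ← zpow_add₀ h0]
    push_cast
    ring_nf
  have hS : q * theta 1 (q ^ 5) ^ 2 = ∑' p : ℤ × ℤ, q ^ (5 * triZ p.1 + 5 * triZ p.2 + 1) := by
    rw [pow_two (theta _ _), theta_mul_theta one_ne_zero one_ne_zero h05 hq5 h05 hq5,
      ← tsum_mul_left]
    refine tsum_congr fun p => ?_
    have a1 := pw (triZ p.1) 0 0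
    have a2 := pw (triZ p.2) 0 0
    simp only [zpow_zero, mul_one, mul_zero, add_zero] at a1 a2
    rw [one_zpow, one_zpow, mul_one, mul_one, a1, a2, zpow_add₀ h0, zpow_add₀ h0, zpow_one]
    ring
  rw [theta_mul_theta z0 (pow_ne_zero 2 z0) h0 hq h0 hq]
  rw [tsum_partition (r := 5) (fun k p => ![(p.2 - 2 * p.1, p.1 + 2 * p.2),
    (1 - p.1 - 2 * p.2, p.2 - 2 * p.1), (p.1 + 2 * p.2, 2 * p.1 - p.2 + 1),
    (1 - p.2 + 2 * p.1, 1 - p.1 - 2 * p.2), (p.1 + 2 * p.2 - 1, 2 * p.1 - p.2)] k) ?_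
    (theta_mul_summable z0 (pow_ne_zero 2 z0) h0 hq)]
  · have cT : ∀ (k : ℕ) (M N : ℤ × ℤ → ℤ), (∀ p, triZ (M p) + triZ (N p) =
        5 * triZ p.1 + 3 * p.1 + (5 * triZ p.2 + p.2)) → (∀ p, ∃ c, M p + 2 * N p = k + 5 * c) →
        ∑' p, (q ^ triZ (M p) * ζ ^ M p) * (q ^ triZ (N p) * (ζ ^ 2) ^ N p) =
          ζ ^ k * thetaT q := by
      intro k M N hE hk
      rw [hT, ← tsum_mul_left]
      refine tsum_congr fun p => ?_
      obtain ⟨c, hc⟩ := hk p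
      exact term _ _ c _ _ (hE p) hc
    have b0 := cT 0 (fun p => p.2 - 2 * p.1) (fun p => p.1 + 2 * p.2)
      (fun p => by linarith [two_mul_triZ (p.2 - 2 * p.1), two_mul_triZ (p.1 + 2 * p.2),
        two_mul_triZ p.1, two_mul_triZ p.2]) (fun p => ⟨p.2, by push_cast; ring⟩)
    have b1 := cT 1 (fun p => 1 - p.1 - 2 * p.2) (fun p => p.2 - 2 * p.1)
      (fun p => by linarith [two_mul_triZ (1 - p.1 - 2 * p.2), two_mul_triZ (p.2 - 2 * p.1),
        two_mul_triZ p.1, two_mul_triZ p.2]) (fun p => ⟨-p.1, by push_cast; ring⟩)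
    have b2 := cT 2 (fun p => p.1 + 2 * p.2) (fun p => 2 * p.1 - p.2 + 1)
      (fun p => by linarith [two_mul_triZ (p.1 + 2 * p.2), two_mul_triZ (2 * p.1 - p.2 + 1),
        two_mul_triZ p.1, two_mul_triZ p.2]) (fun p => ⟨p.1, by push_cast; ring⟩)
    have b3 := cT 3 (fun p => 1 - p.2 + 2 * p.1) (fun p => 1 - p.1 - 2 * p.2)
      (fun p => by linarith [two_mul_triZ (1 - p.2 + 2 * p.1), two_mul_triZ (1 - p.1 - 2 * p.2),
        two_mul_triZ p.1, two_mul_triZ p.2]) (fun p => ⟨-p.2, by push_cast; ring⟩)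
    have b4 : ∑' p : ℤ × ℤ, (q ^ triZ (p.1 + 2 * p.2 - 1) * ζ ^ (p.1 + 2 * p.2 - 1)) *
        (q ^ triZ (2 * p.1 - p.2) * (ζ ^ 2) ^ (2 * p.1 - p.2)) =
        ζ ^ 4 * (q * theta 1 (q ^ 5) ^ 2) := by
      rw [hS, ← tsum_mul_left]
      refine tsum_congr fun p => term _ _ (p.1 - 1) _ _ ?_ (by push_cast; ring)
      linarith [two_mul_triZ (p.1 + 2 * p.2 - 1), two_mul_triZ (2 * p.1 - p.2),
        two_mul_triZ p.1, two_mul_triZ p.2]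
    rw [Fin.sum_univ_five]
    refine (congrArg (ζ * ·) (congrArg₂ (· + ·) (congrArg₂ (· + ·) (congrArg₂ (· + ·)
      (congrArg₂ (· + ·) b0 b1) b2) b3) b4)).trans ?_
    linear_combination ζ * thetaT q * hζ + (q * theta 1 (q ^ 5) ^ 2 - thetaT q) * z5
  · constructor
    · rintro ⟨k, i, j⟩ ⟨k', i', j'⟩ h
      fin_cases k <;> fin_cases k' <;> simp [Prod.ext_iff] at h ⊢ <;> omega
    · rintro ⟨m, n⟩
      have : (m + 2 * n) % 5 = 0 ∨ (m + 2 * n) % 5 = 1 ∨ (m + 2 * n) % 5 = 2 ∨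
        (m + 2 * n) % 5 = 3 ∨ (m + 2 * n) % 5 = 4 := by omega
      rcases this with h | h | h | h | h
      · exact ⟨(0, ((n - 2 * m) / 5, (m + 2 * n) / 5)), by simp [Prod.ext_iff]; omega⟩
      · exact ⟨(1, ((1 - m - 2 * n) / 5, (n - 2 * m + 2) / 5)), by simp [Prod.ext_iff]; omega⟩
      · exact ⟨(2, ((m + 2 * n - 2) / 5, (2 * m - n + 1) / 5)), by simp [Prod.ext_iff]; omega⟩
      · exact ⟨(3, ((2 * m - n - 1) / 5, (3 - m - 2 * n) / 5)), by simp [Prod.ext_iff]; omega⟩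
      · exact ⟨(4, ((m + 2 * n + 1) / 5, (2 * m - n + 2) / 5)), by simp [Prod.ext_iff]; omega⟩

/-- The generating function of `tquad 1 5 5 5` as a combination of two Lambert series. The common
factor of `lambertA_eq` and `lambertB_eq` is multiplied by
`thetaT q + (q * theta 1 (q ^ 5) ^ 2 - thetaT q)`, so `thetaT` disappears. -/
theorem theta_eq_lambert {q ζ : ℂ} (h0 : q ≠ 0) (hq : ‖q‖ < 1)
    (hζ : 1 + ζ + ζ ^ 2 + ζ ^ 3 + ζ ^ 4 = 0) :
    (ζ + ζ ^ 4 - ζ ^ 2 - ζ ^ 3) * (q ^ 2 * (theta 1 q * theta 1 (q ^ 5) ^ 3)) =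
      4 * ((ζ + ζ ^ 4 - ζ ^ 2 - ζ ^ 3) * (lam q (q ^ 10) + lam (q ^ 9) (q ^ 10) -
        (lam (q ^ 3) (q ^ 10) + lam (q ^ 7) (q ^ 10))) -
      (lam (ζ * q) (q ^ 2) + lam (ζ ^ 4 * q) (q ^ 2) -
        (lam (ζ ^ 2 * q) (q ^ 2) + lam (ζ ^ 3 * q) (q ^ 2)))) := by
  have a := lambertA_eq h0 hq hζ
  rw [theta_split h0 hq hζ] at a
  linear_combination a - (ζ + ζ ^ 4 - ζ ^ 2 - ζ ^ 3) * lambertB_eq h0 hq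

/-! ### The quadratic character and Lambert series -/

/-- The quadratic character modulo `5`. -/
def chi (d : ℕ) : ℤ := jacobiSym d 5

lemma chi_mod (d : ℕ) : chi d = chi (d % 5) := by
  rw [chi, chi, jacobiSym.mod_left]; push_cast; rfl

lemma chi_zero : chi 0 = 0 := by norm_num [chi]
lemma chi_one : chi 1 = 1 := by norm_num [chi]
lemma chi_two : chi 2 = -1 := by norm_num [chi]
lemma chi_three : chi 3 = -1 := by norm_num [chi]
lemma chi_four : chi 4 = 1 := by norm_num [chi]

lemma chi_mul (a b : ℕ) : chi (a * b) = chi a * chi b := by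
  rw [chi, Nat.cast_mul, jacobiSym.mul_left]; rfl

lemma chi_abs (d : ℕ) : |chi d| ≤ 1 := by
  rw [chi_mod]
  have : d % 5 < 5 := Nat.mod_lt _ (by norm_num)
  interval_cases d % 5 <;> simp [chi_zero, chi_one, chi_two, chi_three, chi_four]

lemma hasSum_of_eq {ι : Type*} {f g : ι → ℂ} {a b : ℂ} (h : HasSum f a) (hfg : ∀ i, g i = f i)
    (hab : b = a) : HasSum g b := by
  rw [hab, funext hfg]; exact h

/-- A Lambert series as a power series. -/
lemma lambert_series {u v : ℕ → ℤ} (hu : ∀ a, |u a| ≤ 1) (hv : ∀ a, |v a| ≤ 1) (hu0 : u 0 = 0)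
    {q : ℂ} (hq : ‖q‖ < 1) :
    HasSum (fun m : ℕ => ((∑ x ∈ m.divisorsAntidiagonal, u x.1 * (v x.2 * x.2) : ℤ) : ℂ) * q ^ m)
      (∑' a : ℕ, (u a : ℂ) * ∑' b : ℕ, (v b * b : ℂ) * (q ^ a) ^ b) := by
  have hs : Summable fun c : ℕ+ × ℕ+ =>
      (u c.1 : ℂ) * ((v c.2 * (c.2 : ℕ) : ℂ) * (q ^ (c.1 : ℕ)) ^ (c.2 : ℕ)) := by
    refine Summable.of_norm_bounded (g := fun c : ℕ+ × ℕ+ =>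
      ‖(((c.2 : ℕ) : ℂ)) ^ 1 * q ^ (c.1 * c.2 : ℕ)‖) (summable_prod_mul_pow 1 hq).norm fun c => ?_
    have h1 : ‖(u c.1 : ℂ)‖ ≤ 1 := by rw [Complex.norm_intCast]; exact_mod_cast hu _
    have h2 : ‖(v c.2 : ℂ)‖ ≤ 1 := by rw [Complex.norm_intCast]; exact_mod_cast hv _
    rw [← pow_mul, norm_mul, norm_mul, norm_mul, norm_mul, pow_one]
    calc _ ≤ 1 * ((1 * ‖((c.2 : ℕ) : ℂ)‖) * ‖q ^ (c.1 * c.2 : ℕ)‖) := by gcongr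
      _ = _ := by ring
  have hn : ∀ f : ℕ → ℂ, f 0 = 0 → ∑' a : ℕ, f a = ∑' a : ℕ+, f a := by
    intro f hf
    refine (Function.Injective.tsum_eq PNat.coe_injective fun a ha => ?_).symm
    exact ⟨⟨a, Nat.pos_of_ne_zero fun h => ha (by rw [h, hf])⟩, rfl⟩
  have e : ∑' a : ℕ, (u a : ℂ) * ∑' b : ℕ, (v b * b : ℂ) * (q ^ a) ^ b = ∑' c : ℕ+ × ℕ+,
      (u c.1 : ℂ) * ((v c.2 * (c.2 : ℕ) : ℂ) * (q ^ (c.1 : ℕ)) ^ (c.2 : ℕ)) := by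
    rw [hs.tsum_prod, hn _ (by simp [hu0])]
    refine tsum_congr fun a => ?_
    rw [hn _ (by simp), ← tsum_mul_left]
  rw [e, ← sigmaAntidiagonalEquivProd.tsum_eq]
  have hs' := (sigmaAntidiagonalEquivProd.summable_iff).2 hs
  rw [← PNat.coe_injective.hasSum_iff]
  · have h := hs'.hasSum.sigma fun m => hasSum_fintype _
    refine hasSum_of_eq h (fun m => ?_) rfl
    simp only [Function.comp_apply, sigmaAntidiagonalEquivProd, divisorsAntidiagonalFactors,
      PNat.mk_coe, Equiv.coe_fn_mk]
    rw [← Finset.attach_eq_univ, (m : ℕ).divisorsAntidiagonal.sum_attach (fun x : ℕ × ℕ =>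
      (u x.1 : ℂ) * ((v x.2 * (x.2 : ℕ) : ℂ) * (q ^ x.1) ^ x.2))]
    push_cast
    rw [Finset.sum_mul]
    refine Finset.sum_congr rfl fun x hx => ?_
    rw [← (Nat.mem_divisorsAntidiagonal.1 hx).1, pow_mul]
    ring
  · intro m hm
    have : m = 0 := by
      by_contra h
      exact hm ⟨⟨m, Nat.pos_of_ne_zero h⟩, rfl⟩
    simp [this]

/-! ### Coefficients of the two Lambert series -/

/-- `∑ χ(a) (m / a)` over the factorizations `m = a b` with `a` odd. -/
def betaSum (m : ℕ) : ℤ := ∑ x ∈ m.divisorsAntidiagonal, ((x.1 % 2 : ℕ) * chi x.1) * (1 * x.2)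

/-- `∑ χ(b) b` over the factorizations `m = a b` with `a` odd. -/
def alphaSum (m : ℕ) : ℤ := ∑ x ∈ m.divisorsAntidiagonal, (x.1 % 2 : ℕ) * (chi x.2 * x.2)

lemma abs_mod_two (a : ℕ) : |((a % 2 : ℕ) : ℤ)| ≤ 1 := by
  rcases Nat.mod_two_eq_zero_or_one a with h | h <;> simp [h]

lemma summable_lambert {u : ℕ → ℤ} (hu : ∀ a, |u a| ≤ 1) {q : ℂ} (hq : ‖q‖ < 1) :
    Summable fun a : ℕ => (u a : ℂ) * (q ^ a / (1 - q ^ a) ^ 2) := by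
  have := lam_summable 1 hq
  simp only [one_mul] at this
  refine Summable.of_norm_bounded this fun a => ?_
  rw [norm_mul]
  have h1 : ‖(u a : ℂ)‖ ≤ 1 := by rw [Complex.norm_intCast]; exact_mod_cast hu _
  nlinarith [norm_nonneg (q ^ a / (1 - q ^ a) ^ 2)]

lemma lam_pow (q : ℂ) (j k : ℕ) :
    lam (q ^ j) (q ^ k) = ∑' n : ℕ, q ^ (j + k * n) / (1 - q ^ (j + k * n)) ^ 2 := by
  simp only [lam, ← pow_mul, ← pow_add]

lemma lambertB_hasSum {q : ℂ} (hq : ‖q‖ < 1) :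
    HasSum (fun m : ℕ => (betaSum m : ℂ) * q ^ m)
      (lam q (q ^ 10) + lam (q ^ 9) (q ^ 10) - (lam (q ^ 3) (q ^ 10) + lam (q ^ 7) (q ^ 10))) := by
  have hu : ∀ a : ℕ, |((a % 2 : ℕ) * chi a : ℤ)| ≤ 1 := fun a => by
    rw [abs_mul]; exact mul_le_one₀ (abs_mod_two a) (abs_nonneg _) (chi_abs a)
  have h := lambert_series (u := fun a => (a % 2 : ℕ) * chi a) (v := fun _ => 1) hu (by simp)
    (by simp) hq
  refine hasSum_of_eq h (fun _ => rfl) (Eq.symm ?_)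
  have e : ∀ a : ℕ, (((a % 2 : ℕ) * chi a : ℤ) : ℂ) * ∑' b : ℕ, (((1 : ℤ) : ℂ) * b) * (q ^ a) ^ b =
      (((a % 2 : ℕ) * chi a : ℤ) : ℂ) * (q ^ a / (1 - q ^ a) ^ 2) := by
    intro a
    rcases Nat.eq_zero_or_pos a with rfl | ha
    · simp
    · congr 1
      simp only [Int.cast_one, one_mul]
      exact tsum_coe_mul_geometric_of_norm_lt_one (norm_pow_lt_one hq ha.ne')
  rw [tsum_congr e, Nat.sumByResidueClasses (summable_lambert hu hq) 10]
  have c : ∀ j n : ℕ, (((((j + 10 * n) % 2 : ℕ) * chi (j + 10 * n) : ℤ)) : ℂ) =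
      (((j % 2 : ℕ) * chi (j % 5) : ℤ) : ℂ) := by
    intro j n
    rw [chi_mod, show (j + 10 * n) % 2 = j % 2 by omega, show (j + 10 * n) % 5 = j % 5 by omega]
  simp only [c, tsum_mul_left, ← lam_pow]
  change ∑ j : Fin 10, ((((j : ℕ) % 2 : ℕ) * chi ((j : ℕ) % 5) : ℤ) : ℂ) *
    lam (q ^ (j : ℕ)) (q ^ 10) = _
  simp only [Fin.sum_univ_succ]
  simp [chi_zero, chi_one, chi_two, chi_three, chi_four]
  ring

/-- Separability of the Gauss sum modulo `5`: `∑ χ(j) ζ^{jn} = χ(n) ∑ χ(j) ζ^j`. -/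
lemma chi_gauss {ζ : ℂ} (hζ : 1 + ζ + ζ ^ 2 + ζ ^ 3 + ζ ^ 4 = 0) (n : ℕ) :
    ζ ^ n + (ζ ^ 4) ^ n - ((ζ ^ 2) ^ n + (ζ ^ 3) ^ n) = (ζ + ζ ^ 4 - ζ ^ 2 - ζ ^ 3) * chi n := by
  have z5 : ζ ^ 5 = 1 := by linear_combination (ζ - 1) * hζ
  have r : ∀ j : ℕ, (ζ ^ j) ^ n = (ζ ^ j) ^ (n % 5) := by
    intro j
    conv_lhs => rw [← Nat.div_add_mod n 5, pow_add, pow_mul, ← pow_mul ζ j 5, mul_comm j 5,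
      pow_mul ζ 5 j, z5, one_pow, one_pow, one_mul]
  have r1 := r 1
  rw [pow_one] at r1
  rw [r1, r, r, r, chi_mod]
  have : n % 5 < 5 := Nat.mod_lt _ (by norm_num)
  interval_cases n % 5 <;> simp only [chi_zero, chi_one, chi_two, chi_three, chi_four] <;> push_cast
  · ring
  · ring
  · linear_combination (ζ ^ 3 - ζ) * z5
  · linear_combination (ζ ^ 2 * (ζ ^ 5 + 1) - (ζ + ζ ^ 4)) * z5
  · linear_combination (ζ * (ζ ^ 10 + ζ ^ 5 + 1) - ζ ^ 3 - ζ ^ 2 * (ζ ^ 5 + 1)) * z5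

lemma lambertA_hasSum {q ζ : ℂ} (hq : ‖q‖ < 1)
    (hζ : 1 + ζ + ζ ^ 2 + ζ ^ 3 + ζ ^ 4 = 0) :
    HasSum (fun m : ℕ => ((ζ + ζ ^ 4 - ζ ^ 2 - ζ ^ 3) * alphaSum m : ℂ) * q ^ m)
      (lam (ζ * q) (q ^ 2) + lam (ζ ^ 4 * q) (q ^ 2) -
        (lam (ζ ^ 2 * q) (q ^ 2) + lam (ζ ^ 3 * q) (q ^ 2))) := by
  have hq2 := norm_pow_lt_one hq (k := 2) (by norm_num)
  have z5 : ζ ^ 5 = 1 := by linear_combination (ζ - 1) * hζ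
  have zn : ‖ζ‖ = 1 := by
    have : ‖ζ‖ ^ 5 = 1 := by rw [← norm_pow, z5, norm_one]
    exact (pow_eq_one_iff_of_nonneg (norm_nonneg _) (by norm_num)).1 this
  have h := (lambert_series (u := fun a => (a % 2 : ℕ)) (v := chi) abs_mod_two chi_abs
    (by simp) hq).mul_left (ζ + ζ ^ 4 - ζ ^ 2 - ζ ^ 3)
  -- the contribution of a single `r = q ^ a`
  have inner : ∀ r : ℂ, ‖r‖ < 1 → (ζ + ζ ^ 4 - ζ ^ 2 - ζ ^ 3) * ∑' b : ℕ, (chi b * b : ℂ) * r ^ b =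
      ζ * r / (1 - ζ * r) ^ 2 + ζ ^ 4 * r / (1 - ζ ^ 4 * r) ^ 2 -
      (ζ ^ 2 * r / (1 - ζ ^ 2 * r) ^ 2 + ζ ^ 3 * r / (1 - ζ ^ 3 * r) ^ 2) := by
    intro r hr
    have hz : ∀ j : ℕ, ‖ζ ^ j * r‖ < 1 := fun j => by
      rw [norm_mul, norm_pow, zn, one_pow, one_mul]; exact hr
    have s := fun j => hasSum_coe_mul_geometric_of_norm_lt_one (hz j)
    have s1 := s 1
    rw [pow_one] at s1
    rw [← tsum_mul_left]
    refine HasSum.tsum_eq ?_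
    refine hasSum_of_eq ((s1.add (s 4)).sub ((s 2).add (s 3))) (fun n => ?_) rfl
    simp only [mul_pow]
    linear_combination (-(n : ℂ) * r ^ n) * chi_gauss hζ n
  have L : ∀ j : ℕ, Summable fun n : ℕ => ζ ^ j * q ^ (1 + 2 * n) / (1 - ζ ^ j * q ^ (1 + 2 * n)) ^ 2 := by
    intro j
    have := (lam_summable (ζ ^ j * q) hq2).of_norm
    simpa only [mul_assoc, ← pow_mul, ← pow_succ', add_comm] using this
  have L' : ∀ j : ℕ, lam (ζ ^ j * q) (q ^ 2) =
      ∑' n : ℕ, ζ ^ j * q ^ (1 + 2 * n) / (1 - ζ ^ j * q ^ (1 + 2 * n)) ^ 2 := by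
    intro j
    simp only [lam, mul_assoc, ← pow_mul, ← pow_succ', add_comm]
  have L1 := L 1
  have L1' := L' 1
  rw [pow_one] at L1 L1'
  rw [L1', L', L', L', ← L1.tsum_add (L 4), ← (L 2).tsum_add (L 3),
    ← (L1.add (L 4)).tsum_sub ((L 2).add (L 3))]
  rw [← tsum_mul_left] at h
  have inj : Function.Injective fun n : ℕ => 1 + 2 * n := fun a b hab => by simpa using hab
  rw [← inj.tsum_eq] at h
  · refine hasSum_of_eq h (fun m => ?_) (tsum_congr fun n => ?_)
    · rw [alphaSum]; ring
    · have hr : ‖q ^ (1 + 2 * n)‖ < 1 := norm_pow_lt_one hq (by omega)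
      rw [← inner _ hr, show (1 + 2 * n) % 2 = 1 by omega]
      simp
  · intro a ha
    by_contra hr
    refine ha ?_
    have : a % 2 = 0 := by
      by_contra h2
      exact hr ⟨a / 2, by simp only; omega⟩
    simp [this]

/-! ### The generating function of `tquad 1 5 5 5` -/

lemma theta_one_hasSum {q : ℂ} (h0 : q ≠ 0) (hq : ‖q‖ < 1) :
    (Summable fun n : ℤ => ‖q ^ triZ n‖) ∧ theta 1 q = ∑' n : ℤ, q ^ triZ n := by
  have h := theta_summable one_ne_zero h0 hq
  simp only [one_zpow, mul_one] at h
  exact ⟨h, by simp only [theta, one_zpow, mul_one]⟩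

/-- The generating function of `tquad 1 5 5 5`. -/
lemma tquad_hasSum {q : ℂ} (h0 : q ≠ 0) (hq : ‖q‖ < 1) :
    HasSum (fun n : ℕ => (tquad 1 5 5 5 n : ℂ) * q ^ n) (theta 1 q * theta 1 (q ^ 5) ^ 3) := by
  have hq5 := norm_pow_lt_one hq (k := 5) (by norm_num)
  obtain ⟨s1, e1⟩ := theta_one_hasSum h0 hq
  obtain ⟨s5, e5⟩ := theta_one_hasSum (pow_ne_zero 5 h0) hq5
  have t2 := s5.mul_norm s5
  have t3 := s5.mul_norm t2
  have t4 := s1.mul_norm t3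
  have hs : HasSum (fun p : ℤ × ℤ × ℤ × ℤ => q ^ triZ p.1 * ((q ^ 5) ^ triZ p.2.1 *
      ((q ^ 5) ^ triZ p.2.2.1 * (q ^ 5) ^ triZ p.2.2.2))) (theta 1 q * theta 1 (q ^ 5) ^ 3) := by
    have e : theta 1 q * theta 1 (q ^ 5) ^ 3 = ∑' p : ℤ × ℤ × ℤ × ℤ, q ^ triZ p.1 *
        ((q ^ 5) ^ triZ p.2.1 * ((q ^ 5) ^ triZ p.2.2.1 * (q ^ 5) ^ triZ p.2.2.2)) := by
      rw [← tsum_mul_tsum_of_summable_norm s1 t3, ← tsum_mul_tsum_of_summable_norm s5 t2,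
        ← tsum_mul_tsum_of_summable_norm s5 s5, ← e1, ← e5]
      ring
    rw [e]
    exact t4.of_norm.hasSum
  set E : ℤ × ℤ × ℤ × ℤ → ℕ := fun p =>
    (triZ p.1 + 5 * triZ p.2.1 + 5 * triZ p.2.2.1 + 5 * triZ p.2.2.2).toNat with hE
  have hEc : ∀ p, (E p : ℤ) = triZ p.1 + 5 * triZ p.2.1 + 5 * triZ p.2.2.1 + 5 * triZ p.2.2.2 := by
    intro p
    have := triZ_nonneg p.1
    have := triZ_nonneg p.2.1
    have := triZ_nonneg p.2.2.1
    have := triZ_nonneg p.2.2.2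
    simp only [hE]
    omega
  have hs' : HasSum (fun p => q ^ E p) (theta 1 q * theta 1 (q ^ 5) ^ 3) := by
    refine hasSum_of_eq hs (fun p => ?_) rfl
    rw [← zpow_natCast q (E p), hEc, zpow_add₀ h0, zpow_add₀ h0, zpow_add₀ h0, zpow_mul, zpow_mul,
      zpow_mul]
    norm_cast
    ring
  refine hasSum_of_eq (hs'.tsum_fiberwise E) (fun n => ?_) rfl
  have e : ∀ b : (E ⁻¹' {n}), q ^ E (b : ℤ × ℤ × ℤ × ℤ) = q ^ n := fun b => by
    rw [show E b = n from b.2]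
  rw [tsum_congr e, tsum_const, nsmul_eq_mul, tquad]
  congr 2
  refine Nat.card_congr (Equiv.subtypeEquivRight fun p => ?_)
  have := hEc p
  simp only [triZ] at this
  simp only [Set.mem_preimage, Set.mem_singleton_iff]
  push_cast
  omega

/-- Uniqueness of power series coefficients, from values in the punctured unit disc only. -/
lemma coeff_eq_zero {c : ℕ → ℂ} (hc : c 0 = 0)
    (h : ∀ q : ℂ, q ≠ 0 → ‖q‖ < 1 → HasSum (fun m => c m * q ^ m) 0) (m : ℕ) : c m = 0 := by
  have hp : HasFPowerSeriesAt (0 : ℂ → ℂ) (FormalMultilinearSeries.ofScalars ℂ c) 0 := by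
    rw [hasFPowerSeriesAt_iff]
    filter_upwards [Metric.ball_mem_nhds (0 : ℂ) one_pos] with z hz
    simp only [FormalMultilinearSeries.coeff_ofScalars, smul_eq_mul, Pi.zero_apply]
    rcases eq_or_ne z 0 with rfl | hz0
    · refine hasSum_of_eq hasSum_zero (fun m => ?_) rfl
      rcases m with _ | m <;> simp [hc]
    · exact hasSum_of_eq (h z hz0 (by simpa using hz)) (fun m => mul_comm _ _) rfl
  rw [← FormalMultilinearSeries.coeff_ofScalars (𝕜 := ℂ) (p := c) (n := m), hp.eq_zero]
  rfl

/-- Comparison of the coefficients of `q^{n+2}` in `theta_eq_lambert`. -/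
theorem tquad_eq (n : ℕ) :
    (tquad 1 5 5 5 n : ℤ) = 4 * (betaSum (n + 2) - alphaSum (n + 2)) := by
  obtain ⟨ζ, hζ⟩ : ∃ ζ : ℂ, 1 + ζ + ζ ^ 2 + ζ ^ 3 + ζ ^ 4 = 0 := by
    have := (Complex.isPrimitiveRoot_exp 5 (by norm_num)).geom_sum_eq_zero (by norm_num)
    simp only [Finset.sum_range_succ, Finset.sum_range_zero, zero_add, pow_zero, pow_one] at this
    exact ⟨_, this⟩
  set g : ℂ := ζ + ζ ^ 4 - ζ ^ 2 - ζ ^ 3 with hg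
  have g0 : g ≠ 0 := by
    -- the Gauss sum modulo `5` has square `5`
    have : g ^ 2 = 5 := by
      rw [hg]
      linear_combination (ζ ^ 4 - 3 * ζ ^ 3 + ζ ^ 2 + 5 * ζ - 5) * hζ
    intro h
    rw [h] at this
    norm_num at this
  set t : ℕ → ℂ := fun m => if 2 ≤ m then (tquad 1 5 5 5 (m - 2) : ℂ) else 0 with ht
  have key : ∀ m, g * t m - 4 * (g * betaSum m - g * alphaSum m) = 0 := by
    refine coeff_eq_zero (by simp [ht, betaSum, alphaSum]) fun q h0 hq => ?_
    have s1 : HasSum (fun m => t m * q ^ m) (q ^ 2 * (theta 1 q * theta 1 (q ^ 5) ^ 3)) := by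
      have inj : Function.Injective fun n : ℕ => n + 2 := fun a b h => by simpa using h
      rw [← inj.hasSum_iff]
      · refine hasSum_of_eq ((tquad_hasSum h0 hq).mul_left (q ^ 2)) (fun n => ?_) rfl
        simp only [ht, Function.comp_apply, Nat.le_add_left, if_true, Nat.add_sub_cancel]
        ring
      · intro m hm
        have : ¬ 2 ≤ m := fun h => hm ⟨m - 2, by simp only; omega⟩
        simp [ht, this]
    have s2 := (((lambertB_hasSum hq).mul_left g).sub (lambertA_hasSum hq hζ)).mul_left 4
    refine hasSum_of_eq ((s1.mul_left g).sub s2) (fun m => by rw [← hg]; ring) ?_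
    rw [← theta_eq_lambert h0 hq hζ]
    ring
  have k := key (n + 2)
  simp only [ht, Nat.le_add_left, if_true, Nat.add_sub_cancel] at k
  have k' : g * ((tquad 1 5 5 5 n : ℂ) - 4 * (betaSum (n + 2) - alphaSum (n + 2))) = 0 := by
    linear_combination k
  have k2 := (mul_eq_zero.1 k').resolve_left g0
  have k3 : (tquad 1 5 5 5 n : ℂ) = 4 * (betaSum (n + 2) - alphaSum (n + 2)) := by
    linear_combination k2
  exact_mod_cast k3

/-! ### Divisor sums -/

/-- Splitting the factorizations `2N = a b` by the parity of `a`. -/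
lemma sum_antidiagonal_two_mul (f : ℕ → ℕ → ℤ) (N : ℕ) :
    ∑ x ∈ (2 * N).divisorsAntidiagonal, f x.1 x.2 =
      ∑ x ∈ N.divisorsAntidiagonal, f (2 * x.1) x.2 +
      ∑ x ∈ N.divisorsAntidiagonal, (x.1 % 2 : ℕ) * f x.1 (2 * x.2) := by
  rw [← Finset.sum_filter_add_sum_filter_not _ (fun x : ℕ × ℕ => x.1 % 2 = 0)]
  have e : ∑ x ∈ N.divisorsAntidiagonal, ((x.1 % 2 : ℕ) : ℤ) * f x.1 (2 * x.2) =
      ∑ x ∈ N.divisorsAntidiagonal with ¬ x.1 % 2 = 0, f x.1 (2 * x.2) := by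
    rw [Finset.sum_filter]
    refine Finset.sum_congr rfl fun x _ => ?_
    rcases Nat.mod_two_eq_zero_or_one x.1 with h | h <;> simp [h]
  rw [e]
  congr 1
  · refine Finset.sum_nbij' (fun x => (x.1 / 2, x.2)) (fun x => (2 * x.1, x.2)) ?_ ?_ ?_ ?_ ?_
    · rintro ⟨a, b⟩ h
      simp only [Finset.mem_filter, Nat.mem_divisorsAntidiagonal] at h ⊢
      obtain ⟨⟨h1, h2⟩, h3⟩ := h
      obtain ⟨c, rfl⟩ := Nat.dvd_of_mod_eq_zero h3
      rw [mul_assoc] at h1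
      constructor
      · rw [Nat.mul_div_cancel_left _ two_pos]; omega
      · omega
    · rintro ⟨a, b⟩ h
      simp only [Finset.mem_filter, Nat.mem_divisorsAntidiagonal] at h ⊢
      refine ⟨⟨by rw [mul_assoc, h.1], by omega⟩, by omega⟩
    · rintro ⟨a, b⟩ h
      simp only [Finset.mem_filter] at h
      simp only [Prod.mk.injEq, and_true]
      omega
    · rintro ⟨a, b⟩ h
      simp
    · rintro ⟨a, b⟩ h
      simp only [Finset.mem_filter] at h
      simp only
      rw [Nat.mul_div_cancel' (Nat.dvd_of_mod_eq_zero h.2)]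
  · have hb : ∀ a b : ℕ, a * b = 2 * N → ¬ a % 2 = 0 → b % 2 = 0 := by
      intro a b h1 h3
      have h4 : (a * b) % 2 = 0 := by omega
      rw [Nat.mul_mod] at h4
      rcases Nat.mod_two_eq_zero_or_one b with h | h
      · exact h
      · rw [h, Nat.mod_two_ne_zero.1 h3] at h4; omega
    refine Finset.sum_nbij' (fun x => (x.1, x.2 / 2)) (fun x => (x.1, 2 * x.2)) ?_ ?_ ?_ ?_ ?_
    · rintro ⟨a, b⟩ h
      simp only [Finset.mem_filter, Nat.mem_divisorsAntidiagonal] at h ⊢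
      obtain ⟨⟨h1, h2⟩, h3⟩ := h
      obtain ⟨c, rfl⟩ := Nat.dvd_of_mod_eq_zero (hb a b h1 h3)
      rw [mul_left_comm] at h1
      refine ⟨⟨?_, by omega⟩, h3⟩
      rw [Nat.mul_div_cancel_left _ two_pos]; omega
    · rintro ⟨a, b⟩ h
      simp only [Finset.mem_filter, Nat.mem_divisorsAntidiagonal] at h ⊢
      refine ⟨⟨by rw [mul_left_comm, h.1.1], by omega⟩, h.2⟩
    · rintro ⟨a, b⟩ h
      simp only [Finset.mem_filter, Nat.mem_divisorsAntidiagonal] at h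
      have := hb a b h.1.1 h.2
      simp only [Prod.mk.injEq, true_and]
      omega
    · rintro ⟨a, b⟩ h
      simp
    · rintro ⟨a, b⟩ h
      simp only [Finset.mem_filter, Nat.mem_divisorsAntidiagonal] at h
      simp only
      rw [Nat.mul_div_cancel' (Nat.dvd_of_mod_eq_zero (hb a b h.1.1 h.2))]

lemma chi_two_mul (a : ℕ) : chi (2 * a) = -chi a := by rw [chi_mul, chi_two]; ring

lemma sq_mod_two (a : ℕ) : ((a % 2 : ℕ) : ℤ) * (a % 2 : ℕ) = (a % 2 : ℕ) := by
  rcases Nat.mod_two_eq_zero_or_one a with h | h <;> simp [h]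

lemma betaSum_two_mul (N : ℕ) : betaSum (2 * N) = 2 * betaSum N := by
  rw [betaSum, sum_antidiagonal_two_mul (fun a b => ((a % 2 : ℕ) * chi a) * (1 * b)), betaSum,
    Finset.mul_sum, ← Finset.sum_add_distrib]
  refine Finset.sum_congr rfl fun x _ => ?_
  simp only [Nat.mul_mod_right]
  push_cast
  have := sq_mod_two x.1
  push_cast at this
  linear_combination 2 * chi x.1 * x.2 * this

lemma alphaSum_two_mul (N : ℕ) : alphaSum (2 * N) = -2 * alphaSum N := by
  rw [alphaSum, sum_antidiagonal_two_mul (fun a b => (a % 2 : ℕ) * (chi b * b)), alphaSum,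
    Finset.mul_sum, ← Finset.sum_add_distrib]
  refine Finset.sum_congr rfl fun x _ => ?_
  simp only [Nat.mul_mod_right, chi_two_mul]
  push_cast
  have := sq_mod_two x.1
  push_cast at this
  linear_combination -2 * chi x.2 * x.2 * this

/-- The signed divisor sum of the theorem, over factorizations `N = a b` with `d = b`. -/
def signedSum (N : ℕ) : ℤ :=
  ∑ x ∈ N.divisorsAntidiagonal, (-1) ^ x.2 * (chi x.2 + chi x.1) * x.2

/-- The sums `∑ χ(d) d` and `∑ χ(N/d) d` over the odd divisors `d` of `N`. -/
def oddPart (N : ℕ) : ℤ × ℤ :=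
  (∑ x ∈ N.divisorsAntidiagonal, (x.2 % 2 : ℕ) * (chi x.2 * x.2),
    ∑ x ∈ N.divisorsAntidiagonal, (x.2 % 2 : ℕ) * (chi x.1 * x.2))

lemma oddPart_two_mul (N : ℕ) : oddPart (2 * N) = ((oddPart N).1, -(oddPart N).2) := by
  simp only [oddPart]
  rw [sum_antidiagonal_two_mul (fun a b => (b % 2 : ℕ) * (chi b * b)),
    sum_antidiagonal_two_mul (fun a b => (b % 2 : ℕ) * (chi a * b))]
  simp [chi_two_mul]

/-- The sums `∑ χ(d) d` and `∑ χ(N/d) d` over all divisors `d` of `N`. -/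
def fullSum (N : ℕ) : ℤ × ℤ :=
  (∑ x ∈ N.divisorsAntidiagonal, chi x.2 * x.2, ∑ x ∈ N.divisorsAntidiagonal, chi x.1 * x.2)

lemma fullSum_two_mul (N : ℕ) : fullSum (2 * N) =
    ((fullSum N).1 - 2 * alphaSum N, -(fullSum N).2 + 2 * betaSum N) := by
  simp only [fullSum, alphaSum, betaSum]
  rw [sum_antidiagonal_two_mul (fun a b => chi b * b),
    sum_antidiagonal_two_mul (fun a b => chi a * b)]
  simp only [chi_two_mul, sub_eq_add_neg, Finset.mul_sum, ← Finset.sum_neg_distrib]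
  congr 2 <;> refine Finset.sum_congr rfl fun x _ => ?_ <;> push_cast <;> ring

/-- Removing the sign: `(-1)^d` is `1` minus twice the indicator of odd `d`. -/
lemma signedSum_eq (N : ℕ) : signedSum N =
    (fullSum N).1 + (fullSum N).2 - 2 * ((oddPart N).1 + (oddPart N).2) := by
  simp only [signedSum, fullSum, oddPart, ← Finset.sum_add_distrib, Finset.mul_sum,
    ← Finset.sum_sub_distrib]
  refine Finset.sum_congr rfl fun x _ => ?_
  rcases Nat.even_or_odd x.2 with h | h
  · rw [h.neg_one_pow, Nat.even_iff.1 h]; push_cast; ring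
  · rw [h.neg_one_pow, Nat.odd_iff.1 h]; push_cast; ring

/-- Under `N ↦ 4N` the sums over odd divisors are unchanged, as `χ(4) = 1`, and the sums over all
divisors change by multiples of `alphaSum` and `betaSum`, by `fullSum_two_mul`. -/
lemma signedSum_sub (m : ℕ) :
    signedSum (8 * m) - signedSum (2 * m) = 4 * (betaSum m - alphaSum m) := by
  rw [show 8 * m = 2 * (2 * (2 * m)) by ring, signedSum_eq, signedSum_eq]
  have o1 := oddPart_two_mul (2 * (2 * m))
  rw [oddPart_two_mul (2 * m)] at o1
  have f1 := fullSum_two_mul (2 * (2 * m))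
  rw [fullSum_two_mul (2 * m)] at f1
  rw [o1, f1]
  simp only [alphaSum_two_mul, betaSum_two_mul]
  ring

/-- `(5/d) = (d/5)`: quadratic reciprocity on the odd part, and `(5/2) = -1 = χ(2)`. -/
lemma kroneckerSym_five {d : ℕ} (hd : d ≠ 0) : kroneckerSym 5 d = chi d := by
  have hodd : Odd (d / 2 ^ d.factorization 2) := by
    rw [← Nat.not_even_iff_odd, even_iff_two_dvd]
    exact Nat.not_dvd_ordCompl Nat.prime_two hd
  have h := jacobiSym.quadratic_reciprocity_one_mod_four (a := 5) (by norm_num) hodd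
  have hk : kronTwo 5 = -1 := by decide
  have hp : ∀ k, chi (2 ^ k) = (-1) ^ k := by
    intro k
    induction k with
    | zero => simp [chi_one]
    | succ k ih => rw [pow_succ', chi_two_mul, ih]; ring
  conv_rhs => rw [← Nat.ordProj_mul_ordCompl_eq_self d 2, chi_mul, hp]
  rw [kroneckerSym, hk]
  congr 1

lemma signedSum_divisors (N : ℕ) : ∑ d ∈ N.divisors,
    (-1 : ℤ) ^ d * (kroneckerSym 5 d + kroneckerSym 5 (N / d)) * d = signedSum N := by
  rw [signedSum, Nat.sum_divisorsAntidiagonal' (fun a b => (-1 : ℤ) ^ b * (chi b + chi a) * b)]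
  refine Finset.sum_congr rfl fun d hd => ?_
  have hd' := Nat.dvd_of_mem_divisors hd
  rw [kroneckerSym_five (Nat.pos_of_mem_divisors hd).ne',
    kroneckerSym_five (Nat.div_pos (Nat.divisor_le hd) (Nat.pos_of_mem_divisors hd)).ne']

end

theorem stmt_13 (n : ℕ) (hn : 0 < n) :
    (tquad 1 5 5 5 n : ℤ) =
      ∑ d ∈ (8 * n + 16).divisors,
        (-1 : ℤ) ^ d * (kroneckerSym 5 d + kroneckerSym 5 ((8 * n + 16) / d)) * d -
      ∑ d ∈ (2 * n + 4).divisors,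
        (-1 : ℤ) ^ d * (kroneckerSym 5 d + kroneckerSym 5 ((2 * n + 4) / d)) * d := by
  rw [signedSum_divisors, signedSum_divisors, tquad_eq,
    show 8 * n + 16 = 8 * (n + 2) by ring, show 2 * n + 4 = 2 * (n + 2) by ring, signedSum_sub]
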